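/- arXiv:1909.05850 — 2 statements merged into one kernel-verified Lean document; each statement's English description precedes it below -/
import Mathlib

section
/- (Exact variance of the time-averaged estimating function under stationarity.) Assume μ_b is invariant for the behavior state chain, i.e., μ_b.bind K_b = μ_b. Then for every T ≥ 0, Var_{P_b}[ Σ_{t=0}^T φ(s_t, a_t, r_t, s_{t+1}) ] = (T+1) · E_D[ φ(s,a,r,s')² ] = (T+1) · E_D[ w(s)² η(s,a)² (r + γ v(s') − q(s,a))² ]. -/
open MeasureTheory ProbabilityTheory
open scoped ENNReal

noncomputable section

variable {S A : Type*} [MeasurableSpace S] [MeasurableSpace A]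

/-- `t`-fold composition of a Markov kernel with itself. -/
def kpow {α : Type*} [MeasurableSpace α] (K : Kernel α α) : ℕ → Kernel α α
  | 0 => Kernel.id
  | n + 1 => K ∘ₖ kpow K n

/-- The state-transition kernel induced by a policy `π`. -/
def stateKernel (P : Kernel (S × A) S) (π : Kernel S A) [IsSFiniteKernel π] :
    Kernel S S :=
  P ∘ₖ (Kernel.id ×ₖ π)

/-- The discounted average visitation measure. -/
def dgamma (γ : ℝ) (μe : Measure S) (Ke : Kernel S S) : Measure S :=
  ENNReal.ofReal (1 - γ) •
    Measure.sum fun t : ℕ => ENNReal.ofReal γ ^ t • μe.bind fun s => kpow Ke t s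

/-- The data distribution `D`. -/
def dataLaw (P : Kernel (S × A) S) (R : Kernel (S × A) ℝ) (πb : Kernel S A)
    (μb : Measure S) : Measure (S × A × ℝ × S) :=
  μb.bind fun s => (πb s).bind fun a => (R (s, a)).bind fun r =>
    (P (s, a)).map fun s' => (s, a, r, s')

/-- The law of the initial triple `(s₀, a₀, r₀)` under the behavior policy. -/
def initLaw (R : Kernel (S × A) ℝ) (πb : Kernel S A) (μb : Measure S) :
    Measure (S × A × ℝ) :=
  μb.bind fun s => (πb s).bind fun a => (R (s, a)).map fun r => (s, a, r)

/-- The one-step transition of the behavior trajectory. -/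
def stepLaw (P : Kernel (S × A) S) (R : Kernel (S × A) ℝ) (πb : Kernel S A)
    (x : S × A × ℝ) : Measure (S × A × ℝ) :=
  (P (x.1, x.2.1)).bind fun s' => (πb s').bind fun a' =>
    (R (s', a')).map fun r' => (s', a', r')

/-- The law of the length-`(n+1)` prefix of the behavior trajectory. -/
def finLaw (P : Kernel (S × A) S) (R : Kernel (S × A) ℝ) (πb : Kernel S A)
    (μb : Measure S) : (n : ℕ) → Measure (Fin (n + 1) → S × A × ℝ)
  | 0 => (initLaw R πb μb).map fun x => fun _ => x
  | n + 1 => (finLaw P R πb μb n).bind fun path =>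
      (stepLaw P R πb (path (Fin.last n))).map (Fin.snoc path)

/-- The transition observed at time `t` along a trajectory. -/
def Xt (t : ℕ) (ω : ℕ → S × A × ℝ) : S × A × ℝ × S :=
  ((ω t).1, (ω t).2.1, (ω t).2.2, (ω (t + 1)).1)

/-- The kernel drawing `(s, a, r)` from a state `s`. -/
def sarK (R : Kernel (S × A) ℝ) (πb : Kernel S A) : Kernel S (S × A × ℝ) :=
  Kernel.id ×ₖ (πb ⊗ₖ R)

/-- The kernel drawing the next state from `(s, a, r)`. -/
def nextK (P : Kernel (S × A) S) : Kernel (S × A × ℝ) S :=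
  P.comap (fun x => (x.1, x.2.1)) (by fun_prop)

/-- The one-step kernel of the behavior trajectory. -/
def stepK (P : Kernel (S × A) S) (R : Kernel (S × A) ℝ) (πb : Kernel S A) :
    Kernel (S × A × ℝ) (S × A × ℝ) :=
  sarK R πb ∘ₖ nextK P

instance sarK_markov (R : Kernel (S × A) ℝ) [IsMarkovKernel R] (πb : Kernel S A)
    [IsMarkovKernel πb] : IsMarkovKernel (sarK R πb) := by
  unfold sarK; infer_instance

instance nextK_markov (P : Kernel (S × A) S) [IsMarkovKernel P] :
    IsMarkovKernel (nextK P) := by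
  unfold nextK; infer_instance

instance stepK_markov (P : Kernel (S × A) S) [IsMarkovKernel P]
    (R : Kernel (S × A) ℝ) [IsMarkovKernel R] (πb : Kernel S A)
    [IsMarkovKernel πb] : IsMarkovKernel (stepK P R πb) := by
  unfold stepK; infer_instance

theorem meas_map_mk {α β γ : Type*} [MeasurableSpace α] [MeasurableSpace β] [MeasurableSpace γ]
    (κ : Kernel α β) [IsSFiniteKernel κ] (f : α × β → γ) (hf : Measurable f) :
    Measurable fun a => (κ a).map fun b => f (a, b) := by
  refine Measure.measurable_of_measurable_coe _ fun s hs => ?_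
  have : (fun a => ((κ a).map fun b => f (a, b)) s)
      = fun a => κ a (Prod.mk a ⁻¹' (f ⁻¹' s)) := by
    funext a
    rw [Measure.map_apply (by fun_prop) hs]; rfl
  rw [this]
  exact Kernel.measurable_kernel_prodMk_left (hf hs)

theorem lint_sarK (R : Kernel (S × A) ℝ) [IsMarkovKernel R] (πb : Kernel S A)
    [IsMarkovKernel πb] (s : S) (f : S × A × ℝ → ℝ≥0∞) (hf : Measurable f) :
    ∫⁻ y, f y ∂(sarK R πb s) = ∫⁻ a, ∫⁻ r, f (s, a, r) ∂(R (s, a)) ∂(πb s) := by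
  unfold sarK
  rw [Kernel.lintegral_id_prod hf, Kernel.lintegral_compProd _ _ _ (by fun_prop)]

theorem sarK_eq (R : Kernel (S × A) ℝ) [IsMarkovKernel R] (πb : Kernel S A)
    [IsMarkovKernel πb] (s : S) :
    ((πb s).bind fun a => (R (s, a)).map fun r => (s, a, r)) = sarK R πb s := by
  refine Measure.ext_of_lintegral _ fun f hf => ?_
  rw [lint_sarK R πb s f hf, Measure.lintegral_bind _ hf.aemeasurable]
  · refine lintegral_congr fun a => ?_
    rw [lintegral_map hf (by fun_prop)]
  · refine Measurable.aemeasurable ?_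
    exact (meas_map_mk R (fun p : (S × A) × ℝ => (p.1.1, p.1.2, p.2)) (by fun_prop)).comp
      (measurable_prodMk_left (x := s))

theorem initLaw_eq (R : Kernel (S × A) ℝ) [IsMarkovKernel R] (πb : Kernel S A)
    [IsMarkovKernel πb] (μb : Measure S) : initLaw R πb μb = μb.bind (sarK R πb) := by
  unfold initLaw
  simp_rw [sarK_eq]

theorem stepLaw_eq (P : Kernel (S × A) S) (R : Kernel (S × A) ℝ) [IsMarkovKernel R]
    (πb : Kernel S A) [IsMarkovKernel πb] (x : S × A × ℝ) :
    stepLaw P R πb x = stepK P R πb x := by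
  unfold stepLaw stepK
  simp_rw [sarK_eq]
  rw [Kernel.comp_apply]; rfl

theorem dataLaw_eq (P : Kernel (S × A) S) [IsMarkovKernel P] (R : Kernel (S × A) ℝ)
    [IsMarkovKernel R] (πb : Kernel S A) [IsMarkovKernel πb] (μb : Measure S)
    [IsProbabilityMeasure μb] :
    dataLaw P R πb μb = ((initLaw R πb μb) ⊗ₘ nextK P).map
      (fun p => (p.1.1, p.1.2.1, p.1.2.2, p.2)) := by
  have h1 : ∀ s, ((πb s).bind fun a => (R (s, a)).bind fun r =>
      (P (s, a)).map fun s' => (s, a, r, s')) = (sarK R πb s).bind fun x =>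
        (nextK P x).map fun s' => (x.1, x.2.1, x.2.2, s') := by
    intro s
    have hm : Measurable fun x => (nextK P x).map fun s' => (x.1, x.2.1, x.2.2, s') :=
      meas_map_mk (nextK P) (fun p : (S × A × ℝ) × S => (p.1.1, p.1.2.1, p.1.2.2, p.2))
        (by fun_prop)
    have hm1 : ∀ a, Measurable fun r : ℝ => (P (s, a)).map fun s' => (s, a, r, s') := by
      intro a
      exact hm.comp (f := fun r : ℝ => (s, a, r)) (by fun_prop)
    rw [← sarK_eq]
    refine Measure.ext_of_lintegral _ fun f hf => ?_
    have hmm : Measurable fun a => (R (s, a)).map fun r => (s, a, r) :=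
      (meas_map_mk R (fun p : (S × A) × ℝ => (p.1.1, p.1.2, p.2)) (by fun_prop)).comp
      (measurable_prodMk_left (x := s))
    have hmb : Measurable fun a => (R (s, a)).bind fun r =>
      (P (s, a)).map fun s' => (s, a, r, s') := by
      have : (fun a => (R (s, a)).bind fun r =>
          (P (s, a)).map fun s' => (s, a, r, s')) =
          fun a => ((R (s, a)).map fun r => (s, a, r)).bind fun x =>
            (nextK P x).map fun s' => (x.1, x.2.1, x.2.2, s') := by
        funext a
        refine Measure.ext_of_lintegral _ fun f hf => ?_
        rw [Measure.lintegral_bind (hm1 a).aemeasurable hf.aemeasurable,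
          Measure.lintegral_bind hm.aemeasurable hf.aemeasurable, lintegral_map _ (by fun_prop)]
        · rfl
        · exact (Measure.measurable_lintegral hf).comp hm
      rw [this]
      exact (Measure.measurable_bind' hm).comp hmm
    rw [Measure.lintegral_bind hmb.aemeasurable hf.aemeasurable,
      Measure.lintegral_bind hm.aemeasurable hf.aemeasurable,
      Measure.lintegral_bind (f := fun x => ∫⁻ y, f y ∂((nextK P x).map
        fun s' => (x.1, x.2.1, x.2.2, s'))) hmm.aemeasurable
        ((Measure.measurable_lintegral hf).comp hm).aemeasurable]
    refine lintegral_congr fun a => ?_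
    rw [Measure.lintegral_bind (hm1 a).aemeasurable hf.aemeasurable, lintegral_map _ (by fun_prop)]
    · rfl
    · exact (Measure.measurable_lintegral hf).comp hm
  have hm : Measurable fun x => (nextK P x).map fun s' => (x.1, x.2.1, x.2.2, s') :=
      meas_map_mk (nextK P) (fun p : (S × A × ℝ) × S => (p.1.1, p.1.2.1, p.1.2.2, p.2))
        (by fun_prop)
  unfold dataLaw
  simp_rw [h1]
  rw [initLaw_eq]
  rw [← Measure.bind_bind (Kernel.aemeasurable _) hm.aemeasurable]
  refine Measure.ext_of_lintegral _ fun f hf => ?_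
  rw [Measure.lintegral_bind hm.aemeasurable hf.aemeasurable, lintegral_map hf (by fun_prop),
    Measure.lintegral_compProd (by fun_prop)]
  refine lintegral_congr fun x => ?_
  rw [lintegral_map hf (by fun_prop)]

theorem finLaw_succ (P : Kernel (S × A) S) [IsMarkovKernel P] (R : Kernel (S × A) ℝ)
    [IsMarkovKernel R] (πb : Kernel S A) [IsMarkovKernel πb] (μb : Measure S) (n : ℕ)
    [SFinite (finLaw P R πb μb n)] :
    finLaw P R πb μb (n + 1) = ((finLaw P R πb μb n) ⊗ₘ
      ((stepK P R πb).comap (fun p : Fin (n + 1) → S × A × ℝ => p (Fin.last n))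
        (by fun_prop))).map (fun p => (Fin.snoc p.1 p.2 : Fin (n + 2) → S × A × ℝ)) := by
  have hs : Measurable fun p : (Fin (n + 1) → S × A × ℝ) × (S × A × ℝ) =>
      (Fin.snoc p.1 p.2 : Fin (n + 2) → S × A × ℝ) := by
    refine measurable_pi_lambda _ fun i => ?_
    refine Fin.lastCases ?_ (fun j => ?_) i
    · simp only [Fin.snoc_last]; fun_prop
    · simp only [Fin.snoc_castSucc]; fun_prop
  have hm : Measurable fun path : Fin (n + 1) → S × A × ℝ =>
      (stepK P R πb (path (Fin.last n))).map
        (fun y => (Fin.snoc path y : Fin (n + 2) → S × A × ℝ)) :=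
    meas_map_mk ((stepK P R πb).comap
      (fun p : Fin (n + 1) → S × A × ℝ => p (Fin.last n)) (by fun_prop)) _ hs
  rw [finLaw]
  simp_rw [stepLaw_eq]
  change (finLaw P R πb μb n).bind (fun path : Fin (n + 1) → S × A × ℝ =>
      (stepK P R πb (path (Fin.last n))).map
        (fun y => (Fin.snoc path y : Fin (n + 2) → S × A × ℝ))) = _
  refine Measure.ext_of_lintegral _ fun f hf => ?_
  rw [Measure.lintegral_bind hm.aemeasurable hf.aemeasurable, lintegral_map hf hs,
    Measure.lintegral_compProd (f := fun p : (Fin (n + 1) → S × A × ℝ) × (S × A × ℝ) =>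
      f (Fin.snoc p.1 p.2 : Fin (n + 2) → S × A × ℝ)) (hf.comp hs)]
  refine lintegral_congr fun x => ?_
  rw [lintegral_map hf]
  · rfl
  · exact hs.comp measurable_prodMk_left

/-- The prefix of a trajectory up to time `n`. -/
def pref (n : ℕ) (ω : ℕ → S × A × ℝ) : Fin (n + 1) → S × A × ℝ := fun i => ω i

theorem pref_meas (n : ℕ) : Measurable (pref n : (ℕ → S × A × ℝ) → _) := by
  unfold pref; fun_prop

theorem Xt_meas (t : ℕ) : Measurable (Xt t : (ℕ → S × A × ℝ) → _) := by
  unfold Xt; fun_prop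

theorem joint_law (P : Kernel (S × A) S) [IsMarkovKernel P] (R : Kernel (S × A) ℝ)
    [IsMarkovKernel R] (πb : Kernel S A) [IsMarkovKernel πb] (μb : Measure S)
    (Pb : Measure (ℕ → S × A × ℝ)) [IsProbabilityMeasure Pb]
    (hPb : ∀ n : ℕ, Pb.map (pref n) = finLaw P R πb μb n) (n : ℕ) :
    Pb.map (fun ω => (pref n ω, ω (n + 1))) = (Pb.map (pref n)) ⊗ₘ
      ((stepK P R πb).comap (fun p : Fin (n + 1) → S × A × ℝ => p (Fin.last n))
        (by fun_prop)) := by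
  have : IsProbabilityMeasure (Pb.map (pref n)) :=
    Measure.isProbabilityMeasure_map (pref_meas n).aemeasurable
  have : SFinite (finLaw P R πb μb n) := by rw [← hPb n]; infer_instance
  have hs : Measurable fun p : (Fin (n + 1) → S × A × ℝ) × (S × A × ℝ) =>
      (Fin.snoc p.1 p.2 : Fin (n + 2) → S × A × ℝ) := by
    refine measurable_pi_lambda _ fun i => ?_
    refine Fin.lastCases ?_ (fun j => ?_) i
    · simp only [Fin.snoc_last]; fun_prop
    · simp only [Fin.snoc_castSucc]; fun_prop
  have hu : Measurable fun p : Fin (n + 2) → S × A × ℝ =>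
      ((fun i : Fin (n + 1) => p i.castSucc), p (Fin.last (n + 1))) := by fun_prop
  have h := hPb (n + 1)
  rw [finLaw_succ] at h
  have h2 := congrArg (Measure.map fun p : Fin (n + 2) → S × A × ℝ =>
      ((fun i : Fin (n + 1) => p i.castSucc), p (Fin.last (n + 1)))) h
  rw [Measure.map_map hu (pref_meas _), Measure.map_map hu hs] at h2
  have e1 : ((fun p : Fin (n + 2) → S × A × ℝ =>
      ((fun i : Fin (n + 1) => p i.castSucc), p (Fin.last (n + 1)))) ∘ fun p :
      (Fin (n + 1) → S × A × ℝ) × (S × A × ℝ) =>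
      (Fin.snoc p.1 p.2 : Fin (n + 2) → S × A × ℝ)) = id := by
    funext p
    simp
  rw [e1, Measure.map_id, ← hPb n] at h2
  exact h2

theorem nextK_comp_sarK (P : Kernel (S × A) S) [IsMarkovKernel P] (R : Kernel (S × A) ℝ)
    [IsMarkovKernel R] (πb : Kernel S A) [IsMarkovKernel πb] :
    nextK P ∘ₖ sarK R πb = stateKernel P πb := by
  refine Kernel.ext_fun fun s f hf => ?_
  unfold stateKernel
  rw [Kernel.lintegral_comp _ _ _ hf, Kernel.lintegral_comp _ _ _ hf,
    lint_sarK _ _ _ _ hf.lintegral_kernel, Kernel.lintegral_id_prod hf.lintegral_kernel]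
  refine lintegral_congr fun a => ?_
  simp [nextK, Kernel.comap_apply]

theorem marg_law (P : Kernel (S × A) S) [IsMarkovKernel P] (R : Kernel (S × A) ℝ)
    [IsMarkovKernel R] (πb : Kernel S A) [IsMarkovKernel πb] (μb : Measure S)
    (hstat : μb.bind (fun s => stateKernel P πb s) = μb)
    (Pb : Measure (ℕ → S × A × ℝ)) [IsProbabilityMeasure Pb]
    (hPb : ∀ n : ℕ, Pb.map (pref n) = finLaw P R πb μb n) (n : ℕ) :
    Pb.map (fun ω => ω n) = initLaw R πb μb := by
  induction n with
  | zero =>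
    have h := congrArg (Measure.map fun p : Fin 1 → S × A × ℝ => p 0) (hPb 0)
    rw [Measure.map_map (by fun_prop) (pref_meas _), finLaw,
      Measure.map_map (by fun_prop) (by fun_prop)] at h
    have e : ((fun p : Fin 1 → S × A × ℝ => p 0) ∘ fun x : S × A × ℝ => fun _ : Fin 1 => x) = id := by
      funext x; rfl
    rw [e, Measure.map_id] at h
    exact h
  | succ n ih =>
    have : IsProbabilityMeasure (Pb.map (pref n)) :=
      Measure.isProbabilityMeasure_map (pref_meas n).aemeasurable
    have h := congrArg (Measure.map Prod.snd) (joint_law P R πb μb Pb hPb n)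
    rw [Measure.map_map (by fun_prop) ((pref_meas n).prodMk (by fun_prop))] at h
    refine Eq.trans h ?_
    refine Measure.ext_of_lintegral _ fun f hf => ?_
    rw [lintegral_map hf (by fun_prop), Measure.lintegral_compProd (by fun_prop)]
    simp only [Kernel.comap_apply]
    rw [lintegral_map (f := fun p : Fin (n + 1) → S × A × ℝ =>
      ∫⁻ y, f y ∂(stepK P R πb (p (Fin.last n))))
      (hf.lintegral_kernel.comp (measurable_pi_apply _)) (pref_meas n)]
    have e : ∀ ω : ℕ → S × A × ℝ, pref n ω (Fin.last n) = ω n := fun ω => by simp [pref]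
    simp_rw [e]
    rw [← lintegral_map (f := fun x => ∫⁻ y, f y ∂(stepK P R πb x)) (μ := Pb)
      (g := fun ω => ω n) hf.lintegral_kernel (by fun_prop), ih,
      ← Measure.lintegral_bind (Kernel.aemeasurable _) hf.aemeasurable]
    congr 1
    rw [initLaw_eq, stepK, Measure.comp_assoc, Kernel.comp_assoc, nextK_comp_sarK,
      ← Measure.comp_assoc]
    exact congrArg (fun m : Measure S => m.bind (sarK R πb)) hstat

theorem stepK_map_fst (P : Kernel (S × A) S) [IsMarkovKernel P] (R : Kernel (S × A) ℝ)
    [IsMarkovKernel R] (πb : Kernel S A) [IsMarkovKernel πb] (x : S × A × ℝ) :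
    (stepK P R πb x).map Prod.fst = nextK P x := by
  have : (stepK P R πb).fst = nextK P := by
    rw [stepK, Kernel.fst_comp, sarK, Kernel.fst_prod, Kernel.id_comp]
  rw [← Kernel.fst_apply, this]

theorem lint_next (P : Kernel (S × A) S) [IsMarkovKernel P] (R : Kernel (S × A) ℝ)
    [IsMarkovKernel R] (πb : Kernel S A) [IsMarkovKernel πb] (x : S × A × ℝ)
    (f : S → ℝ≥0∞) (hf : Measurable f) :
    ∫⁻ y, f y.1 ∂(stepK P R πb x) = ∫⁻ s', f s' ∂(nextK P x) := by
  rw [← stepK_map_fst P R πb x, lintegral_map hf (by fun_prop)]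

theorem Xt_law (P : Kernel (S × A) S) [IsMarkovKernel P] (R : Kernel (S × A) ℝ)
    [IsMarkovKernel R] (πb : Kernel S A) [IsMarkovKernel πb] (μb : Measure S)
    [IsProbabilityMeasure μb]
    (hstat : μb.bind (fun s => stateKernel P πb s) = μb)
    (Pb : Measure (ℕ → S × A × ℝ)) [IsProbabilityMeasure Pb]
    (hPb : ∀ n : ℕ, Pb.map (pref n) = finLaw P R πb μb n) (n : ℕ) :
    Pb.map (Xt n) = dataLaw P R πb μb := by
  have : IsProbabilityMeasure (Pb.map (pref n)) :=
      Measure.isProbabilityMeasure_map (pref_meas n).aemeasurable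
  have hm := marg_law P R πb μb hstat Pb hPb n
  have : IsProbabilityMeasure (initLaw R πb μb) := by
    rw [← hm]
    exact Measure.isProbabilityMeasure_map (measurable_pi_apply n).aemeasurable
  rw [dataLaw_eq]
  refine Measure.ext_of_lintegral _ fun f hf => ?_
  rw [lintegral_map hf (Xt_meas n), lintegral_map hf (by fun_prop),
    Measure.lintegral_compProd (by fun_prop)]
  have e : ∀ ω : ℕ → S × A × ℝ, f (Xt n ω) =
    (fun p : (Fin (n + 1) → S × A × ℝ) × (S × A × ℝ) => f ((p.1 (Fin.last n)).1,
      (p.1 (Fin.last n)).2.1, (p.1 (Fin.last n)).2.2, p.2.1)) (pref n ω, ω (n + 1)) := by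
    intro ω; simp [pref, Xt]
  simp_rw [e]
  rw [← lintegral_map (μ := Pb) (f := fun p : (Fin (n + 1) → S × A × ℝ) × (S × A × ℝ) =>
      f ((p.1 (Fin.last n)).1,
      (p.1 (Fin.last n)).2.1, (p.1 (Fin.last n)).2.2, p.2.1)) (by fun_prop)
      ((pref_meas n).prodMk (by fun_prop)), joint_law P R πb μb Pb hPb n,
      Measure.lintegral_compProd (by fun_prop)]
  simp only [Kernel.comap_apply]
  have e2 : ∀ x : S × A × ℝ, ∫⁻ y, f (x.1, x.2.1, x.2.2, y.1) ∂(stepK P R πb x) =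
      ∫⁻ s', f (x.1, x.2.1, x.2.2, s') ∂(nextK P x) := fun x =>
    lint_next P R πb x (fun s' => f (x.1, x.2.1, x.2.2, s')) (by fun_prop)
  simp_rw [e2]
  have hg : Measurable fun x : S × A × ℝ => ∫⁻ s', f (x.1, x.2.1, x.2.2, s') ∂(nextK P x) :=
    Measurable.lintegral_kernel_prod_right' (κ := nextK P)
      (f := fun p : (S × A × ℝ) × S => f (p.1.1, p.1.2.1, p.1.2.2, p.2)) (by fun_prop)
  rw [lintegral_map (f := fun p : Fin (n + 1) → S × A × ℝ => (fun x : S × A × ℝ =>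
    ∫⁻ s', f (x.1, x.2.1, x.2.2, s') ∂(nextK P x)) (p (Fin.last n)))
      (hg.comp (measurable_pi_apply _)) (pref_meas n)]
  have e3 : ∀ ω : ℕ → S × A × ℝ, pref n ω (Fin.last n) = ω n := fun ω => by simp [pref]
  simp_rw [e3]
  rw [← hm, lintegral_map hg (by fun_prop)]

theorem int_bdd {α : Type*} [MeasurableSpace α] (μ : Measure α) [IsProbabilityMeasure μ]
    (f : α → ℝ) (hf : Measurable f) (C : ℝ) (hC : ∀ x, |f x| ≤ C) : Integrable f μ :=
  Integrable.of_bound hf.aestronglyMeasurable C (ae_of_all _ hC)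

theorem abs_int_le {α : Type*} [MeasurableSpace α] (μ : Measure α) [IsProbabilityMeasure μ]
    (f : α → ℝ) (C : ℝ) (hC : ∀ x, |f x| ≤ C) : |∫ x, f x ∂μ| ≤ C := by
  have := norm_integral_le_of_norm_le_const (μ := μ) (f := f) (C := C) (ae_of_all _ hC)
  simpa using this

/-- The conditional mean of `g` given `(s, a, r)`. -/
def psi (P : Kernel (S × A) S) (g : S × A × ℝ × S → ℝ) (x : S × A × ℝ) : ℝ :=
  ∫ s', g (x.1, x.2.1, x.2.2, s') ∂(nextK P x)

theorem psi_meas (P : Kernel (S × A) S) [IsMarkovKernel P] (g : S × A × ℝ × S → ℝ)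
    (hg : Measurable g) : Measurable (psi P g) := by
  have : StronglyMeasurable fun p : (S × A × ℝ) × S => g (p.1.1, p.1.2.1, p.1.2.2, p.2) :=
    Measurable.stronglyMeasurable (by fun_prop)
  exact (this.integral_kernel_prod_right' (κ := nextK P)).measurable

theorem psi_bdd (P : Kernel (S × A) S) [IsMarkovKernel P] (g : S × A × ℝ × S → ℝ)
    (C : ℝ) (hC : ∀ x, |g x| ≤ C) (x : S × A × ℝ) : |psi P g x| ≤ C :=
  abs_int_le _ _ C fun _ => hC _

theorem sar_zero (P : Kernel (S × A) S) [IsMarkovKernel P] (R : Kernel (S × A) ℝ)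
    [IsMarkovKernel R] (πb : Kernel S A) [IsMarkovKernel πb] (g : S × A × ℝ × S → ℝ)
    (hg : Measurable g) (C : ℝ) (hC : ∀ x, |g x| ≤ C)
    (hz : ∀ s a, ∫ r, ∫ s', g (s, a, r, s') ∂(P (s, a)) ∂(R (s, a)) = 0)
    (f : S → ℝ) (hf : Measurable f) (s : S) :
    ∫ y, f y.1 * psi P g y ∂(sarK R πb s) = 0 := by
  have hp := psi_meas P g hg
  rw [sarK, Kernel.prod_apply, Kernel.id_apply, Measure.dirac_prod,
    integral_map (by fun_prop) (Measurable.aestronglyMeasurable (by fun_prop))]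
  change ∫ x : A × ℝ, f s * psi P g (s, x) ∂((πb ⊗ₖ R) s) = 0
  rw [integral_const_mul, ProbabilityTheory.integral_compProd]
  · have : ∀ a, ∫ r, psi P g (s, a, r) ∂(R (s, a)) = 0 := fun a => hz s a
    simp [this]
  · exact int_bdd _ _ (by fun_prop) C fun _ => psi_bdd P g C hC _

theorem step_zero (P : Kernel (S × A) S) [IsMarkovKernel P] (R : Kernel (S × A) ℝ)
    [IsMarkovKernel R] (πb : Kernel S A) [IsMarkovKernel πb] (g : S × A × ℝ × S → ℝ)
    (hg : Measurable g) (C : ℝ) (hC : ∀ x, |g x| ≤ C)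
    (hz : ∀ s a, ∫ r, ∫ s', g (s, a, r, s') ∂(P (s, a)) ∂(R (s, a)) = 0)
    (f : S → ℝ) (hf : Measurable f) (D : ℝ) (hD : ∀ s, |f s| ≤ D) (x : S × A × ℝ) :
    ∫ y, f y.1 * psi P g y ∂(stepK P R πb x) = 0 := by
  have hp := psi_meas P g hg
  rw [stepK, Kernel.integral_comp]
  · simp [sar_zero P R πb g hg C hC hz f hf]
  · refine int_bdd _ _ (by fun_prop) (D * C) fun y => ?_
    rw [abs_mul]
    exact mul_le_mul (hD _) (psi_bdd P g C hC y) (abs_nonneg _) ((abs_nonneg _).trans (hD y.1))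

theorem mean_zero (P : Kernel (S × A) S) [IsMarkovKernel P] (R : Kernel (S × A) ℝ)
    [IsMarkovKernel R] (πb : Kernel S A) [IsMarkovKernel πb] (μb : Measure S)
    [IsProbabilityMeasure μb] (g : S × A × ℝ × S → ℝ)
    (hg : Measurable g) (C : ℝ) (hC : ∀ x, |g x| ≤ C)
    (hz : ∀ s a, ∫ r, ∫ s', g (s, a, r, s') ∂(P (s, a)) ∂(R (s, a)) = 0) :
    ∫ x, g x ∂(dataLaw P R πb μb) = 0 := by
  have hp := psi_meas P g hg
  have : IsProbabilityMeasure (initLaw R πb μb) := by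
    rw [initLaw_eq]; infer_instance
  rw [dataLaw_eq, integral_map (by fun_prop) hg.aestronglyMeasurable,
    Measure.integral_compProd (int_bdd _ _ (by fun_prop) C fun _ => hC _)]
  change ∫ x, psi P g x ∂(initLaw R πb μb) = 0
  rw [initLaw_eq, ← Measure.snd_compProd, Measure.snd, integral_map (by fun_prop)
    hp.aestronglyMeasurable,
    Measure.integral_compProd (int_bdd _ _ (by fun_prop) C fun _ => psi_bdd P g C hC _)]
  have : ∀ s, ∫ y, psi P g y ∂(sarK R πb s) = 0 := fun s => by
    simpa using sar_zero P R πb g hg C hC hz (fun _ => 1) (by fun_prop) s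
  simp [this]

theorem cross_zero (P : Kernel (S × A) S) [IsMarkovKernel P] (R : Kernel (S × A) ℝ)
    [IsMarkovKernel R] (πb : Kernel S A) [IsMarkovKernel πb] (μb : Measure S)
    (Pb : Measure (ℕ → S × A × ℝ)) [IsProbabilityMeasure Pb]
    (hPb : ∀ n : ℕ, Pb.map (pref n) = finLaw P R πb μb n) (g : S × A × ℝ × S → ℝ)
    (hg : Measurable g) (C : ℝ) (hC : ∀ x, |g x| ≤ C)
    (hz : ∀ s a, ∫ r, ∫ s', g (s, a, r, s') ∂(P (s, a)) ∂(R (s, a)) = 0) (n : ℕ)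
    (F : (Fin (n + 1) → S × A × ℝ) × S → ℝ) (hF : Measurable F) (D : ℝ) (hD : ∀ x, |F x| ≤ D) :
    ∫ ω, F (pref n ω, (ω (n + 1)).1) * g (Xt (n + 1) ω) ∂Pb = 0 := by
  have hp := psi_meas P g hg
  have hpr : ∀ n, IsProbabilityMeasure (Pb.map (pref n)) := fun n =>
    Measure.isProbabilityMeasure_map (pref_meas n).aemeasurable
  have hbd : ∀ x y, |F x * g y| ≤ D * C := fun x y => by
    rw [abs_mul]
    exact mul_le_mul (hD _) (hC _) (abs_nonneg _) ((abs_nonneg _).trans (hD x))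
  have hbd' : ∀ x y, |F x * psi P g y| ≤ D * C := fun x y => by
    rw [abs_mul]
    exact mul_le_mul (hD _) (psi_bdd P g C hC y) (abs_nonneg _) ((abs_nonneg _).trans (hD x))
  -- first step: condition on the prefix up to time `n + 1`
  have h1 : ∫ ω, F (pref n ω, (ω (n + 1)).1) * g (Xt (n + 1) ω) ∂Pb =
      ∫ ω, F (pref n ω, (ω (n + 1)).1) * psi P g (ω (n + 1)) ∂Pb := by
    let G : (Fin (n + 2) → S × A × ℝ) × (S × A × ℝ) → ℝ := fun p =>
      F (fun i : Fin (n + 1) => p.1 i.castSucc, (p.1 (Fin.last (n + 1))).1) *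
        g ((p.1 (Fin.last (n + 1))).1, (p.1 (Fin.last (n + 1))).2.1,
          (p.1 (Fin.last (n + 1))).2.2, p.2.1)
    have hG : Measurable G := by fun_prop
    have hGb : ∀ p, |G p| ≤ D * C := fun p => hbd _ _
    have e : ∀ ω : ℕ → S × A × ℝ, F (pref n ω, (ω (n + 1)).1) * g (Xt (n + 1) ω) =
        G (pref (n + 1) ω, ω (n + 1 + 1)) := fun ω => rfl
    simp_rw [e]
    rw [← integral_map (μ := Pb) (φ := fun ω => (pref (n + 1) ω, ω (n + 1 + 1))) (f := G)
      ((pref_meas (n + 1)).prodMk (by fun_prop)).aemeasurable hG.aestronglyMeasurable,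
      joint_law P R πb μb Pb hPb (n + 1),
      Measure.integral_compProd (int_bdd _ _ hG _ hGb)]
    have e2 : ∀ p : Fin (n + 2) → S × A × ℝ, ∫ y, G (p, y) ∂((stepK P R πb).comap
        (fun p : Fin (n + 1 + 1) → S × A × ℝ => p (Fin.last (n + 1))) (by fun_prop) p) =
        F (fun i : Fin (n + 1) => p i.castSucc, (p (Fin.last (n + 1))).1) *
          psi P g (p (Fin.last (n + 1))) := by
      intro p
      rw [Kernel.comap_apply]
      change ∫ y : S × A × ℝ, F (fun i : Fin (n + 1) => p i.castSucc, (p (Fin.last (n + 1))).1) *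
        g ((p (Fin.last (n + 1))).1, (p (Fin.last (n + 1))).2.1,
          (p (Fin.last (n + 1))).2.2, y.1) ∂(stepK P R πb (p (Fin.last (n + 1)))) = _
      rw [integral_const_mul, psi, ← stepK_map_fst P R πb,
        integral_map (by fun_prop) (Measurable.aestronglyMeasurable (by fun_prop))]
    simp_rw [e2]
    rw [integral_map (pref_meas _).aemeasurable (Measurable.aestronglyMeasurable (by fun_prop))]
    rfl
  rw [h1]
  let H : (Fin (n + 1) → S × A × ℝ) × (S × A × ℝ) → ℝ := fun p => F (p.1, p.2.1) * psi P g p.2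
  have hH : Measurable H := by fun_prop
  have hHb : ∀ p, |H p| ≤ D * C := fun p => hbd' _ _
  change ∫ ω, H (pref n ω, ω (n + 1)) ∂Pb = 0
  rw [← integral_map (μ := Pb) (φ := fun ω => (pref n ω, ω (n + 1))) (f := H)
      ((pref_meas n).prodMk (by fun_prop)).aemeasurable hH.aestronglyMeasurable,
      joint_law P R πb μb Pb hPb n,
      Measure.integral_compProd (int_bdd _ _ hH _ hHb)]
  have e2 : ∀ p : Fin (n + 1) → S × A × ℝ, ∫ y, H (p, y) ∂((stepK P R πb).comap
        (fun p : Fin (n + 1) → S × A × ℝ => p (Fin.last n)) (by fun_prop) p) = 0 := by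
    intro p
    rw [Kernel.comap_apply]
    exact step_zero P R πb g hg C hC hz (fun s => F (p, s)) (by fun_prop) D (fun s => hD _) _
  simp_rw [e2]
  simp

theorem second_moment (P : Kernel (S × A) S) [IsMarkovKernel P] (R : Kernel (S × A) ℝ)
    [IsMarkovKernel R] (πb : Kernel S A) [IsMarkovKernel πb] (μb : Measure S)
    [IsProbabilityMeasure μb]
    (hstat : μb.bind (fun s => stateKernel P πb s) = μb)
    (Pb : Measure (ℕ → S × A × ℝ)) [IsProbabilityMeasure Pb]
    (hPb : ∀ n : ℕ, Pb.map (pref n) = finLaw P R πb μb n) (g : S × A × ℝ × S → ℝ)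
    (hg : Measurable g) (C : ℝ) (hC : ∀ x, |g x| ≤ C)
    (hz : ∀ s a, ∫ r, ∫ s', g (s, a, r, s') ∂(P (s, a)) ∂(R (s, a)) = 0) (T : ℕ) :
    ∫ ω, (∑ t ∈ Finset.range (T + 1), g (Xt t ω)) ^ 2 ∂Pb =
      (T + 1 : ℝ) * ∫ x, (g x) ^ 2 ∂(dataLaw P R πb μb) := by
  have hX : ∀ t : ℕ, Measurable (Xt t : (ℕ → S × A × ℝ) → _) := Xt_meas
  have hsq : ∀ t, ∫ ω, (g (Xt t ω)) ^ 2 ∂Pb = ∫ x, (g x) ^ 2 ∂(dataLaw P R πb μb) := by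
    intro t
    rw [← Xt_law P R πb μb hstat Pb hPb t, integral_map (Xt_meas t).aemeasurable
      (Measurable.aestronglyMeasurable (by fun_prop))]
  induction T with
  | zero => simp [hsq]
  | succ T ih =>
    have hSb : ∀ ω : ℕ → S × A × ℝ, |∑ t ∈ Finset.range (T + 1), g (Xt t ω)| ≤ (T + 1) * C := by
      intro ω
      refine (Finset.abs_sum_le_sum_abs _ _).trans ?_
      refine (Finset.sum_le_sum fun i _ => hC _).trans ?_
      simp
    have hcross : ∫ ω, (∑ t ∈ Finset.range (T + 1), g (Xt t ω)) * g (Xt (T + 1) ω) ∂Pb = 0 := by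
      let F : (Fin (T + 1) → S × A × ℝ) × S → ℝ := fun p => ∑ i : Fin (T + 1),
        g ((p.1 i).1, (p.1 i).2.1, (p.1 i).2.2,
          (Fin.snoc (α := fun _ => S) (fun j => (p.1 j).1) p.2 : Fin (T + 2) → S) i.succ)
      have hs : ∀ k : Fin (T + 2), Measurable fun p : (Fin (T + 1) → S × A × ℝ) × S =>
          (Fin.snoc (α := fun _ => S) (fun j => (p.1 j).1) p.2 : Fin (T + 2) → S) k := by
        intro k
        refine Fin.lastCases ?_ (fun j => ?_) k
        · simp only [Fin.snoc_last]; fun_prop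
        · simp only [Fin.snoc_castSucc]; fun_prop
      have hF : Measurable F := by
        refine Finset.measurable_sum _ fun i _ => hg.comp ?_
        have := hs i.succ
        fun_prop
      have hFb : ∀ p, |F p| ≤ (T + 1) * C := by
        intro p
        refine (Finset.abs_sum_le_sum_abs _ _).trans ?_
        refine (Finset.sum_le_sum fun i _ => hC _).trans ?_
        simp
      have hFe : ∀ ω : ℕ → S × A × ℝ, F (pref T ω, (ω (T + 1)).1) =
          ∑ t ∈ Finset.range (T + 1), g (Xt t ω) := by
        intro ω
        have hk : ∀ k : Fin (T + 2), (Fin.snoc (α := fun _ => S) (fun j => (pref T ω j).1)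
            (ω (T + 1)).1 : Fin (T + 2) → S) k = (ω k).1 := by
          intro k
          refine Fin.lastCases ?_ (fun j => ?_) k
          · simp only [Fin.snoc_last]; simp
          · simp only [Fin.snoc_castSucc]; simp [pref]
        rw [Finset.sum_range]
        refine Finset.sum_congr rfl fun i _ => ?_
        rw [hk]
        simp [pref, Xt]
      have := cross_zero P R πb μb Pb hPb g hg C hC hz T F hF _ hFb
      simpa only [hFe] using this
    have e : ∀ ω : ℕ → S × A × ℝ, (∑ t ∈ Finset.range (T + 1 + 1), g (Xt t ω)) ^ 2 =
        (∑ t ∈ Finset.range (T + 1), g (Xt t ω)) ^ 2 +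
        2 * ((∑ t ∈ Finset.range (T + 1), g (Xt t ω)) * g (Xt (T + 1) ω)) +
        (g (Xt (T + 1) ω)) ^ 2 := by
      intro ω; rw [Finset.sum_range_succ]; ring
    simp_rw [e]
    have hSm : Measurable fun ω : ℕ → S × A × ℝ => ∑ t ∈ Finset.range (T + 1), g (Xt t ω) := by
      fun_prop
    have i1 : Integrable (fun ω => (∑ t ∈ Finset.range (T + 1), g (Xt t ω)) ^ 2) Pb :=
      int_bdd _ _ (by fun_prop) (((T + 1) * C) ^ 2) fun ω => by
        rw [abs_pow]; exact pow_le_pow_left₀ (abs_nonneg _) (hSb ω) 2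
    have i2 : Integrable (fun ω => 2 * ((∑ t ∈ Finset.range (T + 1), g (Xt t ω)) *
        g (Xt (T + 1) ω))) Pb :=
      (int_bdd _ _ (by fun_prop) (((T + 1) * C) * C) fun ω => by
        rw [abs_mul]
        exact mul_le_mul (hSb ω) (hC _) (abs_nonneg _) ((abs_nonneg _).trans (hSb ω))).const_mul 2
    have i3 : Integrable (fun ω => (g (Xt (T + 1) ω)) ^ 2) Pb :=
      int_bdd _ _ (by fun_prop) (C ^ 2) fun ω => by
        rw [abs_pow]; exact pow_le_pow_left₀ (abs_nonneg _) (hC _) 2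
    rw [integral_add (by exact i1.add i2) i3, integral_add i1 i2, integral_const_mul, hcross, ih, hsq]
    push_cast; ring

theorem data_ae (P : Kernel (S × A) S) [IsMarkovKernel P] (Rmax : ℝ) (R : Kernel (S × A) ℝ)
    [IsMarkovKernel R] (hR : ∀ p : S × A, R p (Set.Icc (0 : ℝ) Rmax)ᶜ = 0)
    (πb : Kernel S A) [IsMarkovKernel πb] (μb : Measure S)
    [IsProbabilityMeasure μb] :
    ∀ᵐ x ∂(dataLaw P R πb μb), x.2.2.1 ∈ Set.Icc (0 : ℝ) Rmax := by
  have : IsProbabilityMeasure (initLaw R πb μb) := by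
    rw [initLaw_eq]; infer_instance
  have hI : Measurable ((Set.Icc (0 : ℝ) Rmax)ᶜ.indicator (fun _ => (1 : ℝ≥0∞))) :=
    measurable_const.indicator measurableSet_Icc.compl
  have h0 : ∫⁻ x : S × A × ℝ × S, (Set.Icc (0 : ℝ) Rmax)ᶜ.indicator (fun _ => (1 : ℝ≥0∞)) x.2.2.1
      ∂(dataLaw P R πb μb) = 0 := by
    rw [dataLaw_eq, lintegral_map (by fun_prop) (by fun_prop),
      Measure.lintegral_compProd (by fun_prop)]
    simp only [lintegral_const, measure_univ, mul_one]
    rw [initLaw_eq, Measure.lintegral_bind (Kernel.aemeasurable _)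
      (Measurable.aemeasurable (by fun_prop))]
    simp_rw [fun s => lint_sarK R πb s (fun y => (Set.Icc (0 : ℝ) Rmax)ᶜ.indicator
      (fun _ => (1 : ℝ≥0∞)) y.2.2) (by fun_prop)]
    simp only [lintegral_indicator measurableSet_Icc.compl, lintegral_const,
      Measure.restrict_apply_univ, hR, mul_zero, zero_mul]
  rw [lintegral_eq_zero_iff (by fun_prop)] at h0
  filter_upwards [h0] with x hx
  by_contra hn
  simp [Set.indicator, hn] at hx

/-- exact variance of the time-averaged estimating function under
stationarity: if `μ_b` is invariant for the behavior state chain then, for every `T`,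
`Var_{P_b}[Σ_{t=0}^T φ(s_t,a_t,r_t,s_{t+1})] = (T+1)·E_D[φ²]`. -/
theorem exact_variance_under_stationarity
    (P : Kernel (S × A) S) [IsMarkovKernel P]
    (Rmax : ℝ) (hRmax : 0 < Rmax)
    (R : Kernel (S × A) ℝ) [IsMarkovKernel R]
    (hR : ∀ p : S × A, R p (Set.Icc (0 : ℝ) Rmax)ᶜ = 0)
    (γ : ℝ) (hγ0 : 0 < γ) (hγ1 : γ < 1)
    (πe πb : Kernel S A) [IsMarkovKernel πe] [IsMarkovKernel πb]
    (μe μb : Measure S) [IsProbabilityMeasure μe] [IsProbabilityMeasure μb]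
    -- stationarity: μ_b is invariant for the behavior state chain
    (hstat : μb.bind (fun s => stateKernel P πb s) = μb)
    -- the policy density ratio η, bounded
    (η : S → A → ℝ) (hη_meas : Measurable (Function.uncurry η))
    (hη_bdd : ∃ C : ℝ, ∀ s a, 0 ≤ η s a ∧ η s a ≤ C)
    (hη : ∀ᵐ s ∂μb, πe s = (πb s).withDensity fun a => ENNReal.ofReal (η s a))
    -- the stationary density ratio w, a bounded measurable density of d_γ wrt μ_b
    (w : S → ℝ) (hw_meas : Measurable w)
    (hw_bdd : ∃ C : ℝ, ∀ s, 0 ≤ w s ∧ w s ≤ C)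
    (hw : dgamma γ μe (stateKernel P πe) =
      μb.withDensity fun s => ENNReal.ofReal (w s))
    -- the q-function: bounded, measurable and satisfying the Bellman evaluation equation
    (q : S → A → ℝ) (hq_meas : Measurable (Function.uncurry q))
    (hq_bdd : ∃ C : ℝ, ∀ s a, |q s a| ≤ C)
    (hq_bellman : ∀ s a, q s a =
      (∫ r, r ∂(R (s, a))) + γ * ∫ s', (∫ a', q s' a' ∂(πe s')) ∂(P (s, a)))
    -- the efficient estimating function φ
    (φ : S × A × ℝ × S → ℝ)
    (hφ : ∀ x : S × A × ℝ × S, φ x =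
      w x.1 * η x.1 x.2.1 *
        (x.2.2.1 + γ * (∫ a, q x.2.2.2 a ∂(πe x.2.2.2)) - q x.1 x.2.1))
    -- the trajectory law P_b, characterized by its finite-dimensional prefixes
    (Pb : Measure (ℕ → S × A × ℝ)) [IsProbabilityMeasure Pb]
    (hPb : ∀ n : ℕ, Pb.map (fun ω => fun i : Fin (n + 1) => ω i) = finLaw P R πb μb n) :
    ∀ T : ℕ,
      variance (fun ω => ∑ t ∈ Finset.range (T + 1), φ (Xt t ω)) Pb =
        (T + 1 : ℝ) * ∫ x, (φ x) ^ 2 ∂(dataLaw P R πb μb) := by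
  have hPb' : ∀ n : ℕ, Pb.map (pref n) = finLaw P R πb μb n := hPb
  obtain ⟨Cη, hCη⟩ := hη_bdd
  obtain ⟨Cw, hCw⟩ := hw_bdd
  obtain ⟨Cq, hCq⟩ := hq_bdd
  let v : S → ℝ := fun s => ∫ a, q s a ∂(πe s)
  have hv : Measurable v := by
    have : StronglyMeasurable (Function.uncurry q) := hq_meas.stronglyMeasurable
    exact (this.integral_kernel_prod_right' (κ := πe)).measurable
  have hvb : ∀ s, |v s| ≤ Cq := fun s => abs_int_le _ _ _ fun a => hCq s a
  let c : ℝ → ℝ := fun r => max 0 (min r Rmax)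
  have hc : Measurable c := by fun_prop
  have hcb : ∀ r, |c r| ≤ Rmax := fun r => by
    rw [abs_of_nonneg (le_max_left _ _)]
    exact max_le hRmax.le (min_le_right _ _)
  have hce : ∀ r ∈ Set.Icc (0 : ℝ) Rmax, c r = r := fun r hr => by
    simp only [c]; rw [min_eq_left hr.2, max_eq_right hr.1]
  have hcR : ∀ p, ∫ r, c r ∂(R p) = ∫ r, r ∂(R p) := fun p => by
    refine integral_congr_ae ?_
    have : ∀ᵐ r ∂(R p), r ∈ Set.Icc (0 : ℝ) Rmax := hR p
    filter_upwards [this] with r hr using hce r hr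
  let g : S × A × ℝ × S → ℝ := fun x =>
    w x.1 * η x.1 x.2.1 * (c x.2.2.1 + γ * v x.2.2.2 - q x.1 x.2.1)
  have hη' : Measurable fun x : S × A × ℝ × S => η x.1 x.2.1 :=
    hη_meas.comp (f := fun x : S × A × ℝ × S => (x.1, x.2.1)) (by fun_prop)
  have hq' : Measurable fun x : S × A × ℝ × S => q x.1 x.2.1 :=
    hq_meas.comp (f := fun x : S × A × ℝ × S => (x.1, x.2.1)) (by fun_prop)
  have hg : Measurable g := by fun_prop
  have hgb : ∀ x, |g x| ≤ Cw * Cη * (Rmax + γ * Cq + Cq) := by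
    intro x
    simp only [g]
    rw [abs_mul, abs_mul, abs_of_nonneg (hCw x.1).1, abs_of_nonneg (hCη x.1 x.2.1).1]
    have h1 := hCw x.1
    have h2 := hCη x.1 x.2.1
    have hb : |c x.2.2.1 + γ * v x.2.2.2 - q x.1 x.2.1| ≤ Rmax + γ * Cq + Cq := by
      have a1 := hcb x.2.2.1
      have a2 : |γ * v x.2.2.2| ≤ γ * Cq := by
        rw [abs_mul, abs_of_pos hγ0]
        exact mul_le_mul_of_nonneg_left (hvb _) hγ0.le
      have a3 := hCq x.1 x.2.1
      rw [abs_le] at *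
      constructor <;> linarith [a1.1, a1.2, a2.1, a2.2, a3.1, a3.2]
    exact mul_le_mul (mul_le_mul h1.2 h2.2 h2.1 (h1.1.trans h1.2)) hb (abs_nonneg _)
      (mul_nonneg (h1.1.trans h1.2) (h2.1.trans h2.2))
  have hz : ∀ s a, ∫ r, ∫ s', g (s, a, r, s') ∂(P (s, a)) ∂(R (s, a)) = 0 := by
    intro s a
    have iv : Integrable v (P (s, a)) := int_bdd _ _ hv _ hvb
    have ic : Integrable c (R (s, a)) := int_bdd _ _ hc _ hcb
    have e1 : ∀ r, ∫ s', g (s, a, r, s') ∂(P (s, a)) =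
        w s * η s a * (c r + (γ * ∫ s', v s' ∂(P (s, a)) - q s a)) := by
      intro r
      simp only [g]
      rw [integral_const_mul, integral_sub (by exact (integrable_const _).add (iv.const_mul γ))
        (integrable_const _), integral_add (integrable_const _) (iv.const_mul γ),
        integral_const_mul]
      simp only [integral_const, probReal_univ, one_smul]
      ring
    simp_rw [e1]
    rw [integral_const_mul, integral_add ic (integrable_const _), hcR, hq_bellman s a]
    simp only [integral_const, probReal_univ, one_smul, v]
    ring
  have hae : φ =ᵐ[dataLaw P R πb μb] g := by
    filter_upwards [data_ae P Rmax R hR πb μb] with x hx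
    rw [hφ]; simp only [g]; rw [hce _ hx]
  intro T
  have hX : ∀ t : ℕ, Measurable (Xt t : (ℕ → S × A × ℝ) → _) := Xt_meas
  have hae2 : (fun ω => ∑ t ∈ Finset.range (T + 1), φ (Xt t ω)) =ᵐ[Pb]
      fun ω => ∑ t ∈ Finset.range (T + 1), g (Xt t ω) := by
    have : ∀ t, ∀ᵐ ω ∂Pb, φ (Xt t ω) = g (Xt t ω) := by
      intro t
      rw [← Xt_law P R πb μb hstat Pb hPb' t] at hae
      exact ae_of_ae_map (Xt_meas t).aemeasurable hae
    filter_upwards [ae_all_iff.2 this] with ω h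
    exact Finset.sum_congr rfl fun t _ => h t
  rw [variance_congr hae2, variance_of_integral_eq_zero (Measurable.aemeasurable (by fun_prop)),
    second_moment P R πb μb hstat Pb hPb' g hg _ hgb hz T]
  · congr 1
    refine integral_congr_ae ?_
    filter_upwards [hae] with x hx
    rw [hx]
  · rw [integral_finsetSum]
    · refine Finset.sum_eq_zero fun t _ => ?_
      rw [← integral_map (Xt_meas t).aemeasurable hg.aestronglyMeasurable,
        Xt_law P R πb μb hstat Pb hPb' t]
      exact mean_zero P R πb μb g hg _ hgb hz
    · intro t _
      exact int_bdd _ _ (by fun_prop) _ fun _ => hgb _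

end
end

section
/- (Theorem 9: asymptotic normality of the oracle DRL average under α-mixing.) Assume μ_b is invariant for the behavior state chain (μ_b.bind K_b = μ_b), that 0 ≤ w ≤ C_w and 0 ≤ η ≤ C_η for finite constants C_w, C_η, and that the α-mixing coefficients of the stationary process X_t = (s_t, a_t, r_t, s_{t+1}) under P_b are summable: Σ_{m=1}^∞ α_m < ∞, where α_m = sup_t sup { |P_b(G ∩ H) − P_b(G)·P_b(H)| : G ∈ σ(X_0, …, X_t), H ∈ σ(X_{t+m}, X_{t+m+1}, …) }. Then, as T → ∞, the law of √(T+1) · ( (T+1)⁻¹ Σ_{t=0}^T ψ(s_t, a_t, r_t, s_{t+1}; w, q) − ρ ) converges weakly to the Gaussian distribution N(0, σ²) on ℝ, where σ² = E_D[ w(s)² η(s,a)² (r + γ v(s') − q(s,a))² ]. -/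
open MeasureTheory ProbabilityTheory Filter
open scoped ENNReal BoundedContinuousFunction

noncomputable section

variable {S A : Type*} [MeasurableSpace S] [MeasurableSpace A]

/-- The DRL estimating function `ψ(s,a,r,s'; w', q')`. -/
def psiDRL (γ : ℝ) (μe : Measure S) (πe : Kernel S A) (η : S → A → ℝ)
    (w' : S → ℝ) (q' : S → A → ℝ) (x : S × A × ℝ × S) : ℝ :=
  (1 - γ) * (∫ s, (∫ a, q' s a ∂(πe s)) ∂μe) +
    w' x.1 * η x.1 x.2.1 *
      (x.2.2.1 + γ * (∫ a, q' x.2.2.2 a ∂(πe x.2.2.2)) - q' x.1 x.2.1)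

/-- The σ-algebra generated by `X_0, …, X_t`. -/
def pastSA (t : ℕ) : MeasurableSpace (ℕ → S × A × ℝ) :=
  ⨆ i : Fin (t + 1), MeasurableSpace.comap (Xt (i : ℕ)) inferInstance

/-- The σ-algebra generated by `X_m, X_{m+1}, …`. -/
def futureSA (m : ℕ) : MeasurableSpace (ℕ → S × A × ℝ) :=
  ⨆ i : ℕ, MeasurableSpace.comap (Xt (m + i)) inferInstance

/-- The α-mixing coefficient of the process `(X_t)` under `Pb`, at lag `m`. -/
def alphaMix (Pb : Measure (ℕ → S × A × ℝ)) (m : ℕ) : ℝ :=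
  sSup {x : ℝ | ∃ (t : ℕ) (G H : Set (ℕ → S × A × ℝ)),
    MeasurableSet[pastSA (S := S) (A := A) t] G ∧
    MeasurableSet[futureSA (S := S) (A := A) (t + m)] H ∧
    x = |(Pb (G ∩ H)).toReal - (Pb G).toReal * (Pb H).toReal|}


lemma aux_exp_bound (x : ℝ) (hx : |x| ≤ 1) :
    ‖Complex.exp (x * Complex.I) - (1 + x * Complex.I) * (Real.exp (-x ^ 2 / 2) : ℝ)‖
      ≤ 2 * |x| ^ 3 := by
  have h1 := Complex.exp_bound (x := (x : ℂ) * Complex.I) (by simpa using hx) (n := 3) (by norm_num)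
  have hx2 : x ^ 2 ≤ 1 := by rw [← sq_abs]; exact pow_le_one₀ (abs_nonneg _) hx
  have h2 := Real.abs_exp_sub_one_sub_id_le (x := -x ^ 2 / 2) (by
    rw [abs_le]; constructor <;> nlinarith [sq_nonneg x])
  have hx4 : (-x^2/2)^2 ≤ |x|^3 / 4 := by
    have : (-x^2/2)^2 = |x|^3 * |x| / 4 := by rw [← pow_succ, (by decide : Even (3+1)).pow_abs]; ring
    rw [this]
    have : |x|^3 * |x| ≤ |x|^3 * 1 := by gcongr
    linarith
  have e1 : ∑ m ∈ Finset.range 3, ((x : ℂ) * Complex.I) ^ m / (m.factorial : ℂ)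
      = 1 + x * Complex.I - x ^ 2 / 2 := by
    simp [Finset.sum_range_succ, mul_pow, Nat.factorial]; ring
  rw [e1] at h1
  set d := Real.exp (-x ^ 2 / 2) - 1 - (-x ^ 2 / 2) with hd
  have e2 : (Real.exp (-x ^ 2 / 2) : ℂ) = ((d + 1 + (-x^2/2) : ℝ) : ℂ) := by
    rw [hd]; congr 1; ring
  have e3 : Complex.exp (x * Complex.I) - (1 + x * Complex.I) * (Real.exp (-x ^ 2 / 2) : ℝ)
     = (Complex.exp (x * Complex.I) - (1 + x * Complex.I - x ^ 2 / 2))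
        + (((x ^ 3 / 2 : ℝ) : ℂ) * Complex.I - (1 + x * Complex.I) * (d : ℂ)) := by
    rw [e2]; push_cast; ring
  rw [e3]
  have n1 : ‖((x ^ 3 / 2 : ℝ) : ℂ) * Complex.I‖ = |x|^3 / 2 := by
    rw [norm_mul, Complex.norm_real, Complex.norm_I, mul_one, Real.norm_eq_abs, abs_div, abs_pow]; simp
  have n2 : ‖(1 + x * Complex.I) * (d : ℂ)‖ ≤ 2 * (|x|^3 / 4) := by
    rw [norm_mul, Complex.norm_real, Real.norm_eq_abs]
    gcongr
    · calc _ ≤ ‖(1:ℂ)‖ + ‖(x:ℂ) * Complex.I‖ := norm_add_le _ _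
        _ ≤ 2 := by simp; linarith
    · exact h2.trans hx4
  have n0 : ‖(x:ℂ) * Complex.I‖ = |x| := by simp
  rw [n0] at h1
  norm_num [Nat.factorial] at h1
  have t1 := norm_add_le (Complex.exp (x * Complex.I) - (1 + x * Complex.I - x ^ 2 / 2))
        (((x ^ 3 / 2 : ℝ) : ℂ) * Complex.I - (1 + x * Complex.I) * (d : ℂ))
  have t2 := norm_sub_le (((x ^ 3 / 2 : ℝ) : ℂ) * Complex.I) ((1 + x * Complex.I) * (d : ℂ))
  have := pow_nonneg (abs_nonneg x) 3
  linarith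

lemma aux_norm_one_add (x : ℝ) : ‖(1 + x * Complex.I : ℂ)‖ ≤ Real.exp (x ^ 2 / 2) := by
  have : ‖(1 + x * Complex.I : ℂ)‖ = Real.sqrt (1 + x ^ 2) := by
    have := Complex.norm_add_mul_I 1 x
    simpa using this
  rw [this]
  apply Real.sqrt_le_iff.2 ⟨by positivity, ?_⟩
  rw [← Real.exp_nat_mul]
  have := Real.add_one_le_exp (x^2)
  push_cast
  rw [mul_div_cancel₀ _ (by norm_num)]
  linarith

lemma aux_prod_sub (n : ℕ) (a b : ℕ → ℂ) (ε : ℝ) (ha : ∀ i, ‖a i‖ ≤ 1) (hb : ∀ i, ‖b i‖ ≤ 1)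
    (hab : ∀ i, ‖a i - b i‖ ≤ ε) :
    ‖∏ i ∈ Finset.range n, a i - ∏ i ∈ Finset.range n, b i‖ ≤ n * ε := by
  induction n with
  | zero => simp
  | succ n ih =>
    rw [Finset.prod_range_succ, Finset.prod_range_succ]
    have e : (∏ i ∈ Finset.range n, a i) * a n - (∏ i ∈ Finset.range n, b i) * b n
      = (∏ i ∈ Finset.range n, a i - ∏ i ∈ Finset.range n, b i) * a n
        + (∏ i ∈ Finset.range n, b i) * (a n - b n) := by ring
    rw [e]
    refine (norm_add_le _ _).trans ?_
    rw [norm_mul, norm_mul]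
    have hb' : ‖∏ i ∈ Finset.range n, b i‖ ≤ 1 := by
      rw [norm_prod]; exact Finset.prod_le_one (fun _ _ => norm_nonneg _) (fun i _ => hb i)
    have h1 : ‖∏ i ∈ Finset.range n, a i - ∏ i ∈ Finset.range n, b i‖ * ‖a n‖ ≤ (n * ε) * 1 :=
      mul_le_mul ih (ha n) (norm_nonneg _) ((norm_nonneg _).trans ih)
    have h2 : ‖∏ i ∈ Finset.range n, b i‖ * ‖a n - b n‖ ≤ 1 * ε :=
      mul_le_mul hb' (hab n) (norm_nonneg _) zero_le_one
    push_cast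
    linarith

/-- Pointwise estimate (McLeish). -/
lemma aux_pointwise (n : ℕ) (x : ℕ → ℝ) (δ s M : ℝ) (hδ1 : δ ≤ 1) (hs : 0 ≤ s)
    (hx : ∀ i, |x i| ≤ δ) (hM : n * δ ^ 2 ≤ M) :
    ‖Complex.exp ((∑ i ∈ Finset.range n, x i : ℝ) * Complex.I)
      - (∏ i ∈ Finset.range n, (1 + x i * Complex.I)) * (Real.exp (-s / 2) : ℝ)‖
      ≤ n * (2 * δ ^ 3) + Real.exp (M / 2) * |∑ i ∈ Finset.range n, x i ^ 2 - s| := by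
  set V := ∑ i ∈ Finset.range n, x i ^ 2 with hV
  have hV0 : 0 ≤ V := Finset.sum_nonneg fun i _ => sq_nonneg _
  have hVM : V ≤ M := by
    refine le_trans ?_ hM
    calc V ≤ ∑ i ∈ Finset.range n, δ ^ 2 := Finset.sum_le_sum fun i _ => by
            rw [← sq_abs]; exact pow_le_pow_left₀ (abs_nonneg _) (hx i) 2
      _ = _ := by simp
  have e1 : Complex.exp ((∑ i ∈ Finset.range n, x i : ℝ) * Complex.I)
      = ∏ i ∈ Finset.range n, Complex.exp (x i * Complex.I) := by
    rw [← Complex.exp_sum, Complex.ofReal_sum, Finset.sum_mul]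
  have e2 : ∏ i ∈ Finset.range n, ((1 + x i * Complex.I) * (Real.exp (-x i ^ 2 / 2) : ℝ))
      = (∏ i ∈ Finset.range n, (1 + x i * Complex.I)) * (Real.exp (-V / 2) : ℝ) := by
    rw [Finset.prod_mul_distrib, ← Complex.ofReal_prod, ← Real.exp_sum, ← Finset.sum_div,
      Finset.sum_neg_distrib]
  have hT : ‖∏ i ∈ Finset.range n, (1 + x i * Complex.I)‖ ≤ Real.exp (M / 2) := by
    rw [norm_prod]
    calc _ ≤ ∏ i ∈ Finset.range n, Real.exp (x i ^ 2 / 2) :=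
          Finset.prod_le_prod (fun _ _ => norm_nonneg _) (fun i _ => aux_norm_one_add _)
      _ = Real.exp (V / 2) := by rw [← Real.exp_sum, ← Finset.sum_div]
      _ ≤ _ := by gcongr
  have h1 := aux_prod_sub n (fun i => Complex.exp (x i * Complex.I))
    (fun i => (1 + x i * Complex.I) * (Real.exp (-x i ^ 2 / 2) : ℝ)) (2 * δ ^ 3)
    (fun i => by rw [Complex.norm_exp_ofReal_mul_I])
    (fun i => by
      rw [norm_mul, Complex.norm_real, Real.norm_of_nonneg (Real.exp_nonneg _)]
      calc _ ≤ Real.exp (x i ^ 2 / 2) * Real.exp (-x i ^ 2 / 2) := by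
            gcongr; exact aux_norm_one_add _
        _ = 1 := by rw [← Real.exp_add]; ring_nf; simp)
    (fun i => (aux_exp_bound _ ((hx i).trans hδ1)).trans (by
      gcongr; exact hx i))
  rw [e2] at h1
  have h2 : |Real.exp (-V / 2) - Real.exp (-s / 2)| ≤ |V - s| := by
    have key : ∀ a b : ℝ, 0 ≤ a → a ≤ b → Real.exp (-a/2) - Real.exp (-b/2) ≤ b - a := by
      intro a b ha hab
      have h1 : Real.exp (-b/2) = Real.exp (-a/2) * Real.exp (-(b-a)/2) := by
        rw [← Real.exp_add]; ring_nf
      have h2 := Real.add_one_le_exp (-(b-a)/2)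
      have h3 : Real.exp (-a/2) ≤ 1 := Real.exp_le_one_iff.2 (by linarith)
      have h4 := Real.exp_nonneg (-a/2)
      rw [h1]
      nlinarith
    rcases le_total V s with h | h
    · rw [abs_of_nonneg (by simp; linarith), abs_sub_comm, abs_of_nonneg (by linarith)]
      exact key V s hV0 h
    · rw [abs_sub_comm, abs_of_nonneg (by simp; linarith), abs_of_nonneg (by linarith)]
      exact key s V hs h
  rw [e1]
  set E := ∏ i ∈ Finset.range n, Complex.exp (x i * Complex.I)
  set T := ∏ i ∈ Finset.range n, (1 + x i * Complex.I)
  have e3 : E - T * (Real.exp (-s / 2) : ℝ) = (E - T * (Real.exp (-V / 2) : ℝ))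
      + T * ((Real.exp (-V / 2) - Real.exp (-s / 2) : ℝ) : ℂ) := by push_cast; ring
  rw [e3]
  refine (norm_add_le _ _).trans (add_le_add h1 ?_)
  rw [norm_mul, Complex.norm_real, Real.norm_eq_abs]
  gcongr

lemma aux_clt {Ω : Type*} [MeasurableSpace Ω] (μ : Measure Ω) [IsProbabilityMeasure μ]
    (Z : ℕ → Ω → ℝ) (hZ : ∀ t, Measurable (Z t)) (C : ℝ) (hC : ∀ t ω, |Z t ω| ≤ C)
    (hmart : ∀ (c : ℝ) (n : ℕ),
      ∫ ω, (∏ i ∈ Finset.range n, (1 + ((c * Z i ω : ℝ) : ℂ) * Complex.I)) * (Z n ω : ℂ) ∂μ = 0)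
    (v : ℝ) (hv : 0 ≤ v)
    (hV : Tendsto (fun n : ℕ => ∫ ω, |((n:ℝ)+1)⁻¹ * ∑ i ∈ Finset.range (n+1), Z i ω ^ 2 - v| ∂μ)
      atTop (nhds 0)) (f : ℝ →ᵇ ℝ) :
    Tendsto (fun n : ℕ => ∫ ω, f ((Real.sqrt (n + 1))⁻¹ * ∑ i ∈ Finset.range (n+1), Z i ω) ∂μ)
      atTop (nhds (∫ x, f x ∂(gaussianReal 0 v.toNNReal))) := by
  have hC0 : 0 ≤ C := by
    obtain ⟨ω⟩ : Nonempty Ω := μ.nonempty_of_neZero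
    exact (abs_nonneg _).trans (hC 0 ω)
  have hprod : ∀ (c : ℝ) (n : ℕ),
      Measurable (fun ω => ∏ i ∈ Finset.range n, (1 + ((c * Z i ω : ℝ) : ℂ) * Complex.I)) := by
    intro c n; fun_prop
  have hprodb : ∀ (c : ℝ) (n : ℕ) ω,
      ‖∏ i ∈ Finset.range n, (1 + ((c * Z i ω : ℝ) : ℂ) * Complex.I)‖ ≤ (1 + |c| * C) ^ n := by
    intro c n ω
    rw [norm_prod]
    calc _ ≤ ∏ i ∈ Finset.range n, (1 + |c| * C) := by
          refine Finset.prod_le_prod (fun _ _ => norm_nonneg _) fun i _ => ?_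
          refine (norm_add_le _ _).trans ?_
          simp only [norm_one, norm_mul, Complex.norm_real, Complex.norm_I, mul_one, Real.norm_eq_abs]
          gcongr
          exact hC i ω
      _ = _ := by simp
  have hprodi : ∀ (c : ℝ) (n : ℕ),
      Integrable (fun ω => ∏ i ∈ Finset.range n, (1 + ((c * Z i ω : ℝ) : ℂ) * Complex.I)) μ := by
    intro c n
    exact Integrable.of_bound (hprod c n).aestronglyMeasurable _ (ae_of_all _ (hprodb c n))
  have hone : ∀ (c : ℝ) (n : ℕ),
      ∫ ω, (∏ i ∈ Finset.range n, (1 + ((c * Z i ω : ℝ) : ℂ) * Complex.I)) ∂μ = 1 := by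
    intro c n
    induction n with
    | zero => simp
    | succ n ih =>
      have e : ∀ ω, (∏ i ∈ Finset.range (n+1), (1 + ((c * Z i ω : ℝ) : ℂ) * Complex.I))
        = (∏ i ∈ Finset.range n, (1 + ((c * Z i ω : ℝ) : ℂ) * Complex.I))
         + (c * Complex.I) * ((∏ i ∈ Finset.range n, (1 + ((c * Z i ω : ℝ) : ℂ) * Complex.I)) * (Z n ω : ℂ)) := by
        intro ω
        rw [Finset.prod_range_succ]; push_cast; ring
      simp_rw [e]
      rw [integral_add (hprodi c n), integral_const_mul, hmart, ih]
      · simp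
      · apply Integrable.const_mul
        refine (hprodi c n).mul_bdd (c := C) (by fun_prop) (ae_of_all _ fun ω => ?_)
        rw [Complex.norm_real]; exact hC n ω
  have hmeas : ∀ n : ℕ, Measurable fun ω => (Real.sqrt (n + 1))⁻¹ * ∑ i ∈ Finset.range (n+1), Z i ω := by
    intro n; fun_prop
  let ν : ℕ → ProbabilityMeasure ℝ := fun n =>
    ⟨μ.map (fun ω => (Real.sqrt (n + 1))⁻¹ * ∑ i ∈ Finset.range (n+1), Z i ω),
      Measure.isProbabilityMeasure_map (hmeas n).aemeasurable⟩
  let ν' : ProbabilityMeasure ℝ := ⟨gaussianReal 0 v.toNNReal, inferInstance⟩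
  have main : Tendsto ν atTop (nhds ν') := by
    rw [ProbabilityMeasure.tendsto_iff_tendsto_charFun]
    intro u
    simp only [ν, ν', ProbabilityMeasure.coe_mk]
    rw [charFun_gaussianReal]
    rw [tendsto_iff_norm_sub_tendsto_zero]
    have hsq : Tendsto (fun n : ℕ => (Real.sqrt (n + 1))⁻¹) atTop (nhds 0) := by
      apply Tendsto.inv_tendsto_atTop
      exact Real.tendsto_sqrt_atTop.comp (tendsto_atTop_add_const_right _ _ tendsto_natCast_atTop_atTop)
    have hδ : Tendsto (fun n : ℕ => |u| * C * (Real.sqrt (n + 1))⁻¹) atTop (nhds 0) := by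
      simpa using hsq.const_mul (|u| * C)
    have hbnd : Tendsto (fun n : ℕ => 2 * (|u| * C) ^ 2 * (|u| * C * (Real.sqrt (n + 1))⁻¹) +
        Real.exp ((|u| * C) ^ 2 / 2) * (u ^ 2 * ∫ ω, |((n:ℝ)+1)⁻¹ * ∑ i ∈ Finset.range (n+1), Z i ω ^ 2 - v| ∂μ))
        atTop (nhds 0) := by
      simpa using (hδ.const_mul (2 * (|u| * C) ^ 2)).add
        ((hV.const_mul (u^2)).const_mul (Real.exp ((|u| * C) ^ 2 / 2)))
    refine squeeze_zero' (Eventually.of_forall fun _ => norm_nonneg _) ?_ hbnd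
    filter_upwards [hδ.eventually_le_const (zero_lt_one)] with n hn
    set k := (Real.sqrt (n + 1))⁻¹ with hk
    have hk0 : 0 ≤ k := by positivity
    have hk2 : k ^ 2 = ((n:ℝ)+1)⁻¹ := by
      rw [hk, inv_pow, Real.sq_sqrt (by positivity)]
    rw [charFun_apply_real, integral_map (hmeas n).aemeasurable (by fun_prop)]
    have e0 : Complex.exp (u * (0:ℝ) * Complex.I - v.toNNReal * u ^ 2 / 2)
        = (Real.exp (-(u^2 * v) / 2) : ℝ) := by
      have : ((v.toNNReal : ℝ) : ℂ) = v := by rw [Real.coe_toNNReal v hv]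
      push_cast
      congr 1
      have h2 : ((v.toNNReal : NNReal) : ℂ) = v := this
      rw [h2]; simp; ring
    rw [e0]
    have hpt : ∀ ω, ‖Complex.exp (u * ((k * ∑ i ∈ Finset.range (n+1), Z i ω : ℝ) : ℂ) * Complex.I)
       - (∏ i ∈ Finset.range (n+1), (1 + (((u * k) * Z i ω : ℝ) : ℂ) * Complex.I)) * (Real.exp (-(u^2 * v) / 2) : ℝ)‖
       ≤ 2 * (|u| * C) ^ 2 * (|u| * C * k) + Real.exp ((|u| * C) ^ 2 / 2) *
         (u ^ 2 * |((n:ℝ)+1)⁻¹ * ∑ i ∈ Finset.range (n+1), Z i ω ^ 2 - v|) := by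
      intro ω
      have hM : ((n+1 : ℕ):ℝ) * (|u| * C * k) ^ 2 = (|u| * C) ^ 2 := by
        rw [mul_pow, hk2]; push_cast; field_simp
      have := aux_pointwise (n+1) (fun i => (u * k) * Z i ω) (|u| * C * k) (u^2 * v) ((|u| * C)^2)
        hn (by positivity) (fun i => by
          rw [abs_mul, abs_mul, abs_of_nonneg hk0]
          have := hC i ω
          calc |u| * k * |Z i ω| ≤ |u| * k * C := by gcongr
            _ = _ := by ring) hM.le
      convert this using 1
      · congr 2
        congr 1
        rw [← Finset.mul_sum]; push_cast; ring
      · congr 1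
        · rw [← hM]; ring
        · congr 1
          rw [← abs_of_nonneg (sq_nonneg u), ← abs_mul, abs_of_nonneg (sq_nonneg u)]
          congr 1
          simp_rw [mul_pow]
          rw [← Finset.mul_sum, ← hk2]; ring
    have e1 : ∫ ω, Complex.exp (u * ((k * ∑ i ∈ Finset.range (n+1), Z i ω : ℝ) : ℂ) * Complex.I) ∂μ
        - (Real.exp (-(u^2 * v) / 2) : ℝ)
      = ∫ ω, (Complex.exp (u * ((k * ∑ i ∈ Finset.range (n+1), Z i ω : ℝ) : ℂ) * Complex.I)
       - (∏ i ∈ Finset.range (n+1), (1 + (((u * k) * Z i ω : ℝ) : ℂ) * Complex.I)) * (Real.exp (-(u^2 * v) / 2) : ℝ)) ∂μ := by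
      rw [integral_sub, integral_mul_const, hone, one_mul]
      · refine Integrable.of_bound (by fun_prop) 1 (ae_of_all _ fun ω => ?_)
        rw [← Complex.ofReal_mul, Complex.norm_exp_ofReal_mul_I]
      · exact (hprodi _ _).mul_const _
    rw [e1]
    refine (norm_integral_le_integral_norm _).trans ?_
    have hVi : Integrable (fun ω => |((n:ℝ)+1)⁻¹ * ∑ i ∈ Finset.range (n+1), Z i ω ^ 2 - v|) μ := by
      apply Integrable.abs
      apply Integrable.sub _ (integrable_const _)
      apply Integrable.const_mul
      apply integrable_finsetSum
      intro i _
      refine Integrable.of_bound (by fun_prop) (C^2) (ae_of_all _ fun ω => ?_)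
      rw [norm_pow]; exact pow_le_pow_left₀ (norm_nonneg _) (hC i ω) 2
    refine (integral_mono_of_nonneg (ae_of_all _ fun _ => norm_nonneg _) ?_ (ae_of_all _ hpt)).trans ?_
    · exact (integrable_const _).add ((hVi.const_mul _).const_mul _)
    · rw [integral_add (integrable_const _) ((hVi.const_mul _).const_mul _)]
      simp [integral_const_mul]
  have := (ProbabilityMeasure.tendsto_iff_forall_integral_tendsto.1 main) f
  simp only [ν, ν', ProbabilityMeasure.coe_mk] at this
  convert this using 2 with n
  rw [integral_map (hmeas n).aemeasurable (by fun_prop)]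


lemma aux_layer {Ω : Type*} {m m0 : MeasurableSpace Ω} (hm : m ≤ m0) (μ : Measure Ω)
    [IsProbabilityMeasure μ] (f h : Ω → ℝ) (hf : Measurable[m] f) (hf0 : ∀ ω, 0 ≤ f ω)
    (hf1 : ∀ ω, f ω ≤ 1) (hh : Measurable h) (B ε : ℝ) (hB : ∀ ω, |h ω| ≤ B)
    (hG : ∀ G, MeasurableSet[m] G → |∫ ω in G, h ω ∂μ| ≤ ε) :
    |∫ ω, f ω * h ω ∂μ| ≤ ε := by
  have hf' : Measurable f := hf.mono hm le_rfl
  have hset : MeasurableSet {p : Ω × ℝ | p.2 < f p.1} :=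
    measurableSet_lt measurable_snd (hf'.comp measurable_fst)
  let F : Ω → ℝ → ℝ := fun ω x => Set.indicator {p : Ω × ℝ | p.2 < f p.1} (fun p => h p.1) (ω, x)
  have hFm : Measurable (Function.uncurry F) :=
    (hh.comp measurable_fst).indicator hset
  have hFi : Integrable (Function.uncurry F) (μ.prod (volume.restrict (Set.Ioc (0:ℝ) 1))) := by
    refine Integrable.of_bound hFm.aestronglyMeasurable B (ae_of_all _ fun p => ?_)
    have h1 : ‖Set.indicator {p : Ω × ℝ | p.2 < f p.1} (fun p => h p.1) p‖ ≤ ‖h p.1‖ :=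
      norm_indicator_le_norm_self (fun p : Ω × ℝ => h p.1) p
    exact h1.trans (hB p.1)
  have e1 : ∀ ω, f ω * h ω = ∫ x in Set.Ioc (0:ℝ) 1, F ω x := by
    intro ω
    have : F ω = Set.indicator (Set.Iio (f ω)) (fun _ => h ω) := by
      ext x; simp [F, Set.indicator]
    rw [this, integral_indicator measurableSet_Iio, Measure.restrict_restrict measurableSet_Iio,
      setIntegral_const, smul_eq_mul]
    congr 1
    have : (Set.Iio (f ω) ∩ Set.Ioc 0 1 : Set ℝ) =ᵐ[volume] (Set.Ioc 0 (f ω) : Set ℝ) := by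
      have : Set.Iio (f ω) ∩ Set.Ioc 0 1 = Set.Ioo 0 (f ω) := by
        ext x; simp only [Set.mem_inter_iff, Set.mem_Iio, Set.mem_Ioc, Set.mem_Ioo]
        exact ⟨fun h => ⟨h.2.1, h.1⟩, fun h => ⟨h.2, h.1, h.2.le.trans (hf1 ω)⟩⟩
      rw [this]; exact Ioo_ae_eq_Ioc
    rw [measureReal_congr this]
    simp [hf0 ω]
  simp_rw [e1]
  rw [integral_integral_swap hFi]
  have e2 : ∀ x, ∫ ω, F ω x ∂μ = ∫ ω in {ω | x < f ω}, h ω ∂μ := by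
    intro x
    rw [← integral_indicator (measurableSet_lt measurable_const hf')]
    rfl
  simp_rw [e2]
  have := norm_integral_le_of_norm_le_const (μ := volume.restrict (Set.Ioc (0:ℝ) 1))
    (f := fun x => ∫ ω in {ω | x < f ω}, h ω ∂μ) (C := ε)
    (ae_of_all _ fun x => hG _ (hf measurableSet_Ioi))
  simpa using this

lemma aux_cov {Ω : Type*} {m m' m0 : MeasurableSpace Ω} (hm : m ≤ m0) (hm' : m' ≤ m0) (μ : Measure Ω)
    [IsProbabilityMeasure μ] (f g : Ω → ℝ) (hf : Measurable[m] f) (hg : Measurable[m'] g)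
    (hf0 : ∀ ω, 0 ≤ f ω) (hf1 : ∀ ω, f ω ≤ 1) (hg0 : ∀ ω, 0 ≤ g ω) (hg1 : ∀ ω, g ω ≤ 1) (ε : ℝ)
    (hGH : ∀ G H, MeasurableSet[m] G → MeasurableSet[m'] H →
      |(μ (G ∩ H)).toReal - (μ G).toReal * (μ H).toReal| ≤ ε) :
    |∫ ω, f ω * g ω ∂μ - (∫ ω, f ω ∂μ) * (∫ ω, g ω ∂μ)| ≤ ε := by
  have hf' : Measurable f := hf.mono hm le_rfl
  have hg' : Measurable g := hg.mono hm' le_rfl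
  have hfi : Integrable f μ := Integrable.of_bound hf'.aestronglyMeasurable 1
    (ae_of_all _ fun ω => by rw [Real.norm_eq_abs, abs_of_nonneg (hf0 ω)]; exact hf1 ω)
  have hgi : Integrable g μ := Integrable.of_bound hg'.aestronglyMeasurable 1
    (ae_of_all _ fun ω => by rw [Real.norm_eq_abs, abs_of_nonneg (hg0 ω)]; exact hg1 ω)
  have hfgi : Integrable (fun ω => g ω * f ω) μ := Integrable.of_bound (by fun_prop) 1
    (ae_of_all _ fun ω => by
      rw [Real.norm_eq_abs, abs_of_nonneg (mul_nonneg (hg0 ω) (hf0 ω))]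
      exact mul_le_one₀ (hg1 ω) (hf0 ω) (hf1 ω))
  set c := ∫ ω, f ω ∂μ with hc
  have hcb : |c| ≤ 1 := by
    have := norm_integral_le_of_norm_le_const (μ := μ) (f := f) (C := 1)
      (ae_of_all _ fun ω => by rw [Real.norm_eq_abs, abs_of_nonneg (hf0 ω)]; exact hf1 ω)
    simpa using this
  have step1 : ∀ H, MeasurableSet[m'] H → |∫ ω in H, (f ω - c) ∂μ| ≤ ε := by
    intro H hH
    have hH' : MeasurableSet H := hm' _ hH
    have := aux_layer hm μ f (fun ω => Set.indicator H (fun _ => (1:ℝ)) ω - (μ H).toReal) hf hf0 hf1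
      ((measurable_const.indicator hH').sub_const _) 2 ε (fun ω => by
        have h1 : (μ H).toReal ≤ 1 := measureReal_le_one
        have h2 : 0 ≤ (μ H).toReal := ENNReal.toReal_nonneg
        by_cases h : ω ∈ H <;> simp only [h, Set.indicator_of_mem, Set.indicator_of_notMem, not_false_iff] <;> rw [abs_le] <;> constructor <;> linarith)
      (fun G hG => by
        have hG' : MeasurableSet G := hm _ hG
        rw [integral_sub ((integrable_const (1:ℝ)).indicator hH').integrableOn (integrable_const _),
          integral_indicator hH', setIntegral_const, setIntegral_const, smul_eq_mul, mul_one, smul_eq_mul]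
        have := hGH G H hG hH
        rw [measureReal_restrict_apply hH', Set.inter_comm]
        exact this)
    convert this using 2
    rw [integral_sub hfi.integrableOn (integrable_const _), setIntegral_const]
    simp_rw [mul_sub]
    rw [integral_sub _ (hfi.mul_const _), integral_mul_const, smul_eq_mul, ← integral_indicator hH', mul_comm]
    · congr 1
      apply integral_congr_ae (ae_of_all _ fun ω => ?_)
      by_cases h : ω ∈ H <;> simp [h]
    · refine (hfi.indicator hH').congr (ae_of_all _ fun ω => ?_)
      by_cases h : ω ∈ H <;> simp [h]
  have := aux_layer hm' μ g (fun ω => f ω - c) hg hg0 hg1 (by fun_prop) 2 ε (fun ω => by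
    have h1 := hf0 ω
    have h2 := hf1 ω
    have := abs_le.1 hcb
    rw [abs_le]; constructor <;> linarith) step1
  convert this using 2
  simp_rw [mul_sub]
  rw [integral_sub hfgi (hgi.mul_const _), integral_mul_const, mul_comm c]
  simp_rw [mul_comm]

lemma aux_var {Ω : Type*} [MeasurableSpace Ω] (μ : Measure Ω) [IsProbabilityMeasure μ]
    (Y : ℕ → Ω → ℝ) (hY : ∀ t, Measurable (Y t)) (M : ℝ) (hM : ∀ t ω, |Y t ω| ≤ M)
    (a : ℕ → ℝ) (ha0 : ∀ m, 0 ≤ a m) (ha : Summable a)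
    (hcov : ∀ t m, |∫ ω, Y t ω * Y (t + (m + 1)) ω ∂μ| ≤ a m) (n : ℕ) :
    ∫ ω, (∑ i ∈ Finset.range n, Y i ω) ^ 2 ∂μ ≤ n * (M ^ 2 + 2 * ∑' m, a m) := by
  have hYi : ∀ i j, Integrable (fun ω => Y i ω * Y j ω) μ := fun i j =>
    Integrable.of_bound (by fun_prop) (M * M) (ae_of_all _ fun ω => by
      rw [norm_mul]
      exact mul_le_mul (hM i ω) (hM j ω) (norm_nonneg _) ((abs_nonneg _).trans (hM i ω)))
  have hSi : ∀ n, Integrable (fun ω => (∑ i ∈ Finset.range n, Y i ω) ^ 2) μ := by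
    intro n
    simp_rw [sq, Finset.sum_mul_sum]
    exact integrable_finsetSum _ fun i _ => integrable_finsetSum _ fun j _ => hYi i j
  induction n with
  | zero => simp
  | succ n ih =>
    have e : ∀ ω, (∑ i ∈ Finset.range (n+1), Y i ω) ^ 2
      = (∑ i ∈ Finset.range n, Y i ω) ^ 2 + (2 * (∑ i ∈ Finset.range n, Y i ω * Y n ω) + Y n ω * Y n ω) := by
      intro ω; rw [Finset.sum_range_succ, ← Finset.sum_mul]; ring
    simp_rw [e]
    have hs := integrable_finsetSum (Finset.range n) (f := fun i ω => Y i ω * Y n ω) (μ := μ) fun i _ => hYi i n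
    have hs2 : Integrable (fun ω => 2 * (∑ i ∈ Finset.range n, Y i ω * Y n ω) + Y n ω * Y n ω) μ :=
      (hs.const_mul 2).add (hYi n n)
    rw [integral_add (hSi n) hs2, integral_add (hs.const_mul 2) (hYi n n),
      integral_const_mul, integral_finsetSum _ fun i _ => hYi i n]
    have h1 : ∑ i ∈ Finset.range n, ∫ ω, Y i ω * Y n ω ∂μ ≤ ∑' m, a m := by
      calc _ ≤ ∑ i ∈ Finset.range n, a (n - 1 - i) := by
            refine Finset.sum_le_sum fun i hi => ?_
            have hi' := Finset.mem_range.1 hi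
            have := hcov i (n - 1 - i)
            rw [show i + (n - 1 - i + 1) = n by omega] at this
            exact (le_abs_self _).trans this
        _ = ∑ i ∈ Finset.range n, a i := Finset.sum_range_reflect a n
        _ ≤ _ := ha.sum_le_tsum _ fun i _ => ha0 i
    have h2 : ∫ ω, Y n ω * Y n ω ∂μ ≤ M ^ 2 := by
      have := integral_mono (hYi n n) (integrable_const (M^2)) fun ω => by
        show Y n ω * Y n ω ≤ M ^ 2
        rw [← sq, ← sq_abs]; exact pow_le_pow_left₀ (abs_nonneg _) (hM n ω) 2
      simpa using this
    push_cast
    linarith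

lemma aux_L1 {Ω : Type*} [MeasurableSpace Ω] (μ : Measure Ω) [IsProbabilityMeasure μ]
    (Y : ℕ → Ω → ℝ) (hY : ∀ t, Measurable (Y t)) (M : ℝ) (hM : ∀ t ω, |Y t ω| ≤ M)
    (K : ℝ) (hK : ∀ n : ℕ, ∫ ω, (∑ i ∈ Finset.range n, Y i ω) ^ 2 ∂μ ≤ n * K) :
    Tendsto (fun n : ℕ => ∫ ω, |((n:ℝ)+1)⁻¹ * ∑ i ∈ Finset.range (n+1), Y i ω| ∂μ)
      atTop (nhds 0) := by
  have hsq : Tendsto (fun n : ℕ => (Real.sqrt (n + 1))⁻¹) atTop (nhds 0) := by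
    apply Tendsto.inv_tendsto_atTop
    exact Real.tendsto_sqrt_atTop.comp (tendsto_atTop_add_const_right _ _ tendsto_natCast_atTop_atTop)
  have hb : Tendsto (fun n : ℕ => (Real.sqrt (n + 1))⁻¹ * (1 + K)) atTop (nhds 0) := by
    simpa using hsq.mul_const (1 + K)
  refine squeeze_zero (fun n => integral_nonneg fun _ => abs_nonneg _) (fun n => ?_) hb
  have hSb : ∀ ω, |∑ i ∈ Finset.range (n+1), Y i ω| ≤ (n+1) * M := fun ω => by
    refine (Finset.abs_sum_le_sum_abs _ _).trans ?_
    calc _ ≤ ∑ i ∈ Finset.range (n+1), M := Finset.sum_le_sum fun i _ => hM i ω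
      _ = _ := by simp
  set k := (Real.sqrt (n + 1))⁻¹ with hk
  have hk0 : 0 < k := by positivity
  have hk2 : k ^ 2 = ((n:ℝ)+1)⁻¹ := by
    rw [hk, inv_pow, Real.sq_sqrt (by positivity)]
  have hSi : Integrable (fun ω => (∑ i ∈ Finset.range (n+1), Y i ω) ^ 2) μ :=
    Integrable.of_bound (by fun_prop) (((n+1) * M) ^ 2) (ae_of_all _ fun ω => by
      rw [norm_pow]; exact pow_le_pow_left₀ (norm_nonneg _) (hSb ω) 2)
  have hpt : ∀ ω, |((n:ℝ)+1)⁻¹ * ∑ i ∈ Finset.range (n+1), Y i ω|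
      ≤ k + k ^ 3 * (∑ i ∈ Finset.range (n+1), Y i ω) ^ 2 := by
    intro ω
    rw [← hk2, abs_mul, abs_of_nonneg (sq_nonneg k), ← sq_abs (∑ i ∈ Finset.range (n+1), Y i ω)]
    set s := |∑ i ∈ Finset.range (n+1), Y i ω|
    have h1 : 0 ≤ s := abs_nonneg _
    have : 0 ≤ k * ((1 - k * s) ^ 2 + k * s) := by positivity
    nlinarith
  calc _ ≤ ∫ ω, k + k ^ 3 * (∑ i ∈ Finset.range (n+1), Y i ω) ^ 2 ∂μ :=
        integral_mono_of_nonneg (ae_of_all _ fun _ => abs_nonneg _)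
          ((integrable_const _).add (hSi.const_mul _)) (ae_of_all _ hpt)
    _ = k + k ^ 3 * ∫ ω, (∑ i ∈ Finset.range (n+1), Y i ω) ^ 2 ∂μ := by
        rw [integral_add (integrable_const _) (hSi.const_mul _), integral_const_mul]; simp
    _ ≤ k + k ^ 3 * (((n + 1 : ℕ) : ℝ) * K) := by gcongr; exact hK (n+1)
    _ = k * (1 + (k ^ 2 * (n + 1)) * K) := by push_cast; ring
    _ = _ := by rw [hk2, inv_mul_cancel₀ (by positivity), one_mul]

section aux
variable {α β δ E : Type*} [MeasurableSpace α] [MeasurableSpace β] [MeasurableSpace δ]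
  [NormedAddCommGroup E] [NormedSpace ℝ E] [MeasurableSpace E] [BorelSpace E]
  [SecondCountableTopology E]

lemma kmap (κ : Kernel α β) [IsMarkovKernel κ] (g : α × β → δ) (hg : Measurable g) :
    ∃ K : Kernel α δ, IsMarkovKernel K ∧ ∀ a, K a = (κ a).map (fun b => g (a, b)) := by
  refine ⟨(Kernel.id ×ₖ κ).map g, Kernel.IsMarkovKernel.map _ hg, fun a => ?_⟩
  ext s hs
  rw [Kernel.map_apply' _ hg _ hs, Kernel.id_prod_apply' _ _ (hg hs),
    Measure.map_apply (by fun_prop) hs]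
  rfl

lemma kbind (κ : Kernel α β) [IsMarkovKernel κ] (ρ : Kernel (α × β) δ) [IsMarkovKernel ρ] :
    ∃ K : Kernel α δ, IsMarkovKernel K ∧ ∀ a, K a = (κ a).bind (fun b => ρ (a, b)) := by
  refine ⟨ρ ∘ₖ (Kernel.id ×ₖ κ), inferInstance, fun a => ?_⟩
  ext s hs
  have hm : Measurable (fun b => ρ (a, b)) := ρ.measurable.comp (by fun_prop)
  rw [Kernel.comp_apply' _ _ _ hs, Measure.bind_apply hs hm.aemeasurable,
    Kernel.lintegral_id_prod _ ]
  exact Kernel.measurable_coe _ hs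

lemma bdd_int {β E : Type*} [MeasurableSpace β] [NormedAddCommGroup E] [NormedSpace ℝ E] (ν : Measure β) [IsProbabilityMeasure ν] (h : β → E) (B : ℝ)
    (hB : ∀ b, ‖h b‖ ≤ B) : ‖∫ b, h b ∂ν‖ ≤ B := by
  simpa using norm_integral_le_of_norm_le_const (μ := ν) (ae_of_all _ hB)

lemma ibind (μ : Measure α) [IsProbabilityMeasure μ] (K : α → Measure β) (hK : Measurable K)
    (hKp : ∀ a, IsProbabilityMeasure (K a)) (h : β → E) (hh : Measurable h) (B : ℝ)
    (hB : ∀ b, ‖h b‖ ≤ B) : ∫ b, h b ∂(μ.bind K) = ∫ a, ∫ b, h b ∂(K a) ∂μ := by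
  let κ : Kernel α β := ⟨K, hK⟩
  have : IsMarkovKernel κ := ⟨hKp⟩
  have e : μ.bind K = κ ∘ₘ μ := rfl
  rw [e]
  have hi : Integrable h (κ ∘ₘ μ) := by
    exact Integrable.of_bound hh.aestronglyMeasurable B (ae_of_all _ hB)
  rw [Measure.comp_eq_comp_const_apply] at hi ⊢
  rw [Kernel.integral_comp hi]
  rfl

end aux


section laws
variable {E : Type*} [NormedAddCommGroup E] [NormedSpace ℝ E] [MeasurableSpace E] [BorelSpace E]
  [SecondCountableTopology E]

lemma kernel_sar (R : Kernel (S × A) ℝ) [IsMarkovKernel R] (πb : Kernel S A) [IsMarkovKernel πb] :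
    ∃ (K2 : Kernel (S × A) (S × A × ℝ)) (K1 : Kernel S (S × A × ℝ)),
      IsMarkovKernel K2 ∧ IsMarkovKernel K1 ∧
      (∀ s a, (R (s, a)).map (fun r => (s, a, r)) = K2 (s, a)) ∧
      (∀ s, (πb s).bind (fun a => K2 (s, a)) = K1 s) := by
  obtain ⟨K2, h2, e2⟩ := kmap R (fun p : (S × A) × ℝ => (p.1.1, p.1.2, p.2)) (by fun_prop)
  obtain ⟨K1, h1, e1⟩ := kbind πb K2
  exact ⟨K2, K1, h2, h1, fun s a => (e2 (s, a)).symm, fun s => (e1 s).symm⟩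

lemma K1_int (R : Kernel (S × A) ℝ) [IsMarkovKernel R] (πb : Kernel S A) [IsMarkovKernel πb]
    (K2 : Kernel (S × A) (S × A × ℝ)) (K1 : Kernel S (S × A × ℝ)) [IsMarkovKernel K2]
    (e2 : ∀ s a, (R (s, a)).map (fun r => (s, a, r)) = K2 (s, a))
    (e1 : ∀ s, (πb s).bind (fun a => K2 (s, a)) = K1 s)
    (h : S × A × ℝ → E) (hh : Measurable h) (B : ℝ) (hB : ∀ x, ‖h x‖ ≤ B) (s : S) :
    ∫ x, h x ∂(K1 s) = ∫ a, ∫ r, h (s, a, r) ∂(R (s, a)) ∂(πb s) := by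
  rw [← e1, ibind _ (fun a => K2 (s, a)) (K2.measurable.comp (by fun_prop)) (fun a => inferInstance) h hh B hB]
  congr 1; ext a
  rw [← e2, integral_map (by fun_prop) hh.aestronglyMeasurable]

lemma init_int (R : Kernel (S × A) ℝ) [IsMarkovKernel R] (πb : Kernel S A) [IsMarkovKernel πb]
    (μb : Measure S) [IsProbabilityMeasure μb]
    (h : S × A × ℝ → E) (hh : Measurable h) (B : ℝ) (hB : ∀ x, ‖h x‖ ≤ B) :
    ∫ x, h x ∂(initLaw R πb μb) = ∫ s, ∫ a, ∫ r, h (s, a, r) ∂(R (s, a)) ∂(πb s) ∂μb := by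
  obtain ⟨K2, K1, h2, h1, e2, e1⟩ := kernel_sar R πb
  simp only [initLaw, e2, e1]
  rw [ibind _ _ K1.measurable (fun a => inferInstance) h hh B hB]
  simp_rw [K1_int R πb K2 K1 e2 e1 h hh B hB]

lemma step_kernel (P : Kernel (S × A) S) [IsMarkovKernel P]
    (R : Kernel (S × A) ℝ) [IsMarkovKernel R] (πb : Kernel S A) [IsMarkovKernel πb] :
    ∃ K : Kernel (S × A × ℝ) (S × A × ℝ), IsMarkovKernel K ∧ ∀ x, stepLaw P R πb x = K x := by
  obtain ⟨K2, K1, h2, h1, e2, e1⟩ := kernel_sar R πb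
  refine ⟨(K1 ∘ₖ P).comap (fun x => (x.1, x.2.1)) (by fun_prop), inferInstance, fun x => ?_⟩
  simp only [stepLaw, e2, e1]
  rw [Kernel.comap_apply, Kernel.comp_apply]

lemma step_int (P : Kernel (S × A) S) [IsMarkovKernel P]
    (R : Kernel (S × A) ℝ) [IsMarkovKernel R] (πb : Kernel S A) [IsMarkovKernel πb]
    (h : S × A × ℝ → E) (hh : Measurable h) (B : ℝ) (hB : ∀ x, ‖h x‖ ≤ B) (x : S × A × ℝ) :
    ∫ x, h x ∂(stepLaw P R πb x)
      = ∫ s, ∫ a, ∫ r, h (s, a, r) ∂(R (s, a)) ∂(πb s) ∂(P (x.1, x.2.1)) := by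
  obtain ⟨K2, K1, h2, h1, e2, e1⟩ := kernel_sar R πb
  simp only [stepLaw, e2, e1]
  rw [ibind _ _ K1.measurable (fun a => inferInstance) h hh B hB]
  simp_rw [K1_int R πb K2 K1 e2 e1 h hh B hB]

lemma data_int (P : Kernel (S × A) S) [IsMarkovKernel P]
    (R : Kernel (S × A) ℝ) [IsMarkovKernel R] (πb : Kernel S A) [IsMarkovKernel πb]
    (μb : Measure S) [IsProbabilityMeasure μb]
    (h : S × A × ℝ × S → E) (hh : Measurable h) (B : ℝ) (hB : ∀ x, ‖h x‖ ≤ B) :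
    IsProbabilityMeasure (dataLaw P R πb μb) ∧ ∫ x, h x ∂(dataLaw P R πb μb)
      = ∫ s, ∫ a, ∫ r, ∫ s', h (s, a, r, s') ∂(P (s, a)) ∂(R (s, a)) ∂(πb s) ∂μb := by
  obtain ⟨K3, h3, e3⟩ := kmap (P.comap (fun p : (S × A) × ℝ => p.1) (by fun_prop))
    (fun p : ((S × A) × ℝ) × S => (p.1.1.1, p.1.1.2, p.1.2, p.2)) (by fun_prop)
  obtain ⟨K2, h2, e2⟩ := kbind R K3
  obtain ⟨K1, h1, e1⟩ := kbind πb K2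
  have e3' : ∀ s a r, (P (s, a)).map (fun s' => (s, a, r, s')) = K3 ((s, a), r) :=
    fun s a r => (e3 ((s, a), r)).symm
  simp only [dataLaw, e3', ← e2, ← e1]
  refine ⟨inferInstance, ?_⟩
  rw [ibind _ _ K1.measurable (fun a => inferInstance) h hh B hB]
  congr 1; ext s
  rw [e1, ibind _ (fun a => K2 (s, a)) (K2.measurable.comp (by fun_prop)) (fun a => inferInstance) h hh B hB]
  congr 1; ext a
  rw [e2, ibind _ (fun r => K3 ((s, a), r)) (K3.measurable.comp (by fun_prop)) (fun a => inferInstance) h hh B hB]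
  congr 1; ext r
  rw [← e3', integral_map (by fun_prop) hh.aestronglyMeasurable]

lemma meas_snoc {X : Type*} [MeasurableSpace X] (n : ℕ) :
    Measurable (fun p : (Fin (n + 1) → X) × X => (Fin.snoc p.1 p.2 : Fin (n + 2) → X)) := by
  rw [measurable_pi_iff]
  intro i
  refine Fin.lastCases ?_ (fun j => ?_) i
  · simp only [Fin.snoc_last]; fun_prop
  · simp only [Fin.snoc_castSucc]; fun_prop

lemma markov_int (P : Kernel (S × A) S) [IsMarkovKernel P]
    (R : Kernel (S × A) ℝ) [IsMarkovKernel R] (πb : Kernel S A) [IsMarkovKernel πb]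
    (μb : Measure S) [IsProbabilityMeasure μb]
    (Pb : Measure (ℕ → S × A × ℝ)) [IsProbabilityMeasure Pb]
    (hPb : ∀ n : ℕ, Pb.map (fun ω => fun i : Fin (n + 1) => ω i) = finLaw P R πb μb n)
    (n : ℕ) (F : (Fin (n + 1) → S × A × ℝ) → S × A × ℝ → E)
    (hF : Measurable (Function.uncurry F)) (B : ℝ) (hB : ∀ p x, ‖F p x‖ ≤ B) :
    ∫ ω, F (fun i => ω i) (ω (n + 1)) ∂Pb
      = ∫ ω, ∫ x, F (fun i => ω i) x ∂(stepLaw P R πb (ω n)) ∂Pb := by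
  obtain ⟨K, hK, eK⟩ := step_kernel P R πb
  obtain ⟨L, hL, eL⟩ := kmap (K.comap (fun p : Fin (n+1) → S × A × ℝ => p (Fin.last n)) (by fun_prop))
    (fun p : (Fin (n + 1) → S × A × ℝ) × (S × A × ℝ) => (Fin.snoc p.1 p.2 : Fin (n + 2) → S × A × ℝ))
    (meas_snoc n)
  have hr : ∀ n : ℕ, Measurable (fun ω : ℕ → S × A × ℝ => fun i : Fin (n + 1) => ω i) := by
    intro n; fun_prop
  have hp : IsProbabilityMeasure (finLaw P R πb μb n) := by
    rw [← hPb n]; exact Measure.isProbabilityMeasure_map (hr n).aemeasurable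
  have hfin : finLaw P R πb μb (n + 1) = (finLaw P R πb μb n).bind L := by
    simp only [finLaw]
    congr 1; ext1 p
    rw [eL p, eK]; rfl
  let H : (Fin (n + 2) → S × A × ℝ) → E := fun p => F (fun i => p i.castSucc) (p (Fin.last _))
  have hH : Measurable H := by
    exact hF.comp (f := fun p : Fin (n + 2) → S × A × ℝ => ((fun i : Fin (n+1) => p i.castSucc), p (Fin.last _))) (by fun_prop)
  have e1 : ∫ ω, F (fun i => ω i) (ω (n + 1)) ∂Pb = ∫ p, H p ∂(finLaw P R πb μb (n + 1)) := by
    rw [← hPb (n + 1), integral_map (hr _).aemeasurable hH.aestronglyMeasurable]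
    rfl
  have hK' : StronglyMeasurable (fun p : Fin (n+1) → S × A × ℝ => ∫ x, F p x ∂(stepLaw P R πb (p (Fin.last n)))) := by
    simp_rw [eK]
    exact StronglyMeasurable.integral_kernel_prod_right (κ := K.comap (fun p : Fin (n+1) → S × A × ℝ => p (Fin.last n)) (by fun_prop)) hF.stronglyMeasurable
  have e2 : ∫ ω, ∫ x, F (fun i => ω i) x ∂(stepLaw P R πb (ω n)) ∂Pb
     = ∫ p, ∫ x, F p x ∂(stepLaw P R πb (p (Fin.last n))) ∂(finLaw P R πb μb n) := by
    rw [← hPb n, integral_map (hr _).aemeasurable hK'.aestronglyMeasurable]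
    simp
  rw [e1, e2, hfin, ibind _ _ L.measurable (fun _ => inferInstance) H hH B (fun p => hB _ _)]
  congr 1; ext1 p
  have hsn : Measurable (fun b : S × A × ℝ => (Fin.snoc (p, b).1 (p, b).2 : Fin (n + 2) → S × A × ℝ)) :=
    (meas_snoc n).comp (by fun_prop)
  rw [eL, integral_map hsn.aemeasurable hH.aestronglyMeasurable, Kernel.comap_apply, ← eK]
  simp [H]

lemma init_law_int (P : Kernel (S × A) S)
    (R : Kernel (S × A) ℝ) (πb : Kernel S A)
    (μb : Measure S)
    (Pb : Measure (ℕ → S × A × ℝ))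
    (hPb : ∀ n : ℕ, Pb.map (fun ω => fun i : Fin (n + 1) => ω i) = finLaw P R πb μb n)
    (h : S × A × ℝ → E) (hh : Measurable h) :
    ∫ ω, h (ω 0) ∂Pb = ∫ x, h x ∂(initLaw R πb μb) := by
  have h0 := hPb 0
  simp only [finLaw] at h0
  have hr : Measurable (fun ω : ℕ → S × A × ℝ => fun i : Fin (0 + 1) => ω i) :=
    measurable_pi_lambda _ fun i => measurable_pi_apply _
  have hh0 : Measurable (fun p : Fin (0 + 1) → S × A × ℝ => h (p 0)) :=
    hh.comp (measurable_pi_apply _)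
  have hc : Measurable (fun x : S × A × ℝ => fun _ : Fin (0 + 1) => x) :=
    measurable_pi_lambda _ fun _ => measurable_id
  have e1 : ∫ ω, h (ω 0) ∂Pb = ∫ p, h (p 0) ∂(Pb.map (fun ω => fun i : Fin (0 + 1) => ω i)) := by
    rw [integral_map hr.aemeasurable hh0.aestronglyMeasurable]
    rfl
  rw [e1, h0, integral_map hc.aemeasurable hh0.aestronglyMeasurable]

lemma stat_int [CompleteSpace E] (P : Kernel (S × A) S) [IsMarkovKernel P]
    (R : Kernel (S × A) ℝ) [IsMarkovKernel R] (πb : Kernel S A) [IsMarkovKernel πb]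
    (μb : Measure S) [IsProbabilityMeasure μb]
    (hstat : μb.bind (fun s => stateKernel P πb s) = μb)
    (Pb : Measure (ℕ → S × A × ℝ)) [IsProbabilityMeasure Pb]
    (hPb : ∀ n : ℕ, Pb.map (fun ω => fun i : Fin (n + 1) => ω i) = finLaw P R πb μb n)
    (n : ℕ) (B : ℝ) : ∀ (h : S × A × ℝ → E) (_ : Measurable h) (_ : ∀ x, ‖h x‖ ≤ B),
    ∫ ω, h (ω n) ∂Pb = ∫ s, ∫ a, ∫ r, h (s, a, r) ∂(R (s, a)) ∂(πb s) ∂μb := by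
  obtain ⟨K, hK, eK⟩ := step_kernel P R πb
  obtain ⟨K2, K1, h2, h1, e2, e1⟩ := kernel_sar R πb
  induction n with
  | zero =>
    intro h hh hB
    rw [init_law_int P R πb μb Pb hPb h hh, init_int R πb μb h hh B hB]
  | succ n ih =>
    intro h hh hB
    have hm := markov_int P R πb μb Pb hPb n (fun _ x => h x) (hh.comp measurable_snd) B (fun _ x => hB x)
    rw [hm]
    have hKm : StronglyMeasurable (fun y => ∫ x, h x ∂(stepLaw P R πb y)) := by
      simp_rw [eK]
      exact hh.stronglyMeasurable.integral_kernel
    rw [ih (fun y => ∫ x, h x ∂(stepLaw P R πb y)) hKm.measurable (fun y => by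
      rw [eK]; exact bdd_int _ _ _ hB)]
    simp_rw [step_int P R πb h hh B hB]
    simp only [integral_const, probReal_univ, one_smul]
    simp_rw [← K1_int R πb K2 K1 e2 e1 h hh B hB]
    have hJ : StronglyMeasurable (fun s => ∫ x, h x ∂(K1 s)) := hh.stronglyMeasurable.integral_kernel
    have hJb : ∀ s, ‖∫ x, h x ∂(K1 s)‖ ≤ B := fun s => bdd_int _ _ _ hB
    obtain ⟨Q, hQ, eQ⟩ := kbind πb P
    have eQ' : ∀ s, stateKernel P πb s = Q s := by
      intro s
      rw [eQ]
      ext t ht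
      have hm : Measurable (fun b => P (s, b)) := P.measurable.comp (by fun_prop)
      rw [stateKernel, Kernel.comp_apply' _ _ _ ht, Measure.bind_apply ht hm.aemeasurable,
        Kernel.lintegral_id_prod _ ]
      exact Kernel.measurable_coe _ ht
    have hs' : μb.bind Q = μb := (congrArg μb.bind (funext eQ')).symm.trans hstat
    conv_rhs => rw [← hs']
    rw [ibind _ _ Q.measurable (fun _ => inferInstance) _ hJ.measurable B hJb]
    congr 1; ext1 s
    rw [eQ, ibind _ (fun a => P (s, a)) (P.measurable.comp (by fun_prop)) (fun _ => inferInstance) _ hJ.measurable B hJb]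
end laws


section process

lemma meas_Xt (t : ℕ) : Measurable (Xt (S := S) (A := A) t) := by
  unfold Xt; fun_prop

lemma past_le (t : ℕ) : pastSA (S := S) (A := A) t ≤ MeasurableSpace.pi :=
  iSup_le fun i => (meas_Xt (i : ℕ)).comap_le

lemma future_le (t : ℕ) : futureSA (S := S) (A := A) t ≤ MeasurableSpace.pi :=
  iSup_le fun i => (meas_Xt (t + i)).comap_le

lemma meas_past (t : ℕ) : Measurable[pastSA (S := S) (A := A) t] (Xt (S := S) (A := A) t) := by
  have h : MeasurableSpace.comap (Xt (S := S) (A := A) t) inferInstance ≤ pastSA (S := S) (A := A) t :=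
    le_iSup (fun i : Fin (t + 1) => MeasurableSpace.comap (Xt (S := S) (A := A) (i : ℕ)) inferInstance)
      (Fin.last t)
  exact (comap_measurable _).mono h le_rfl

lemma meas_future (t : ℕ) : Measurable[futureSA (S := S) (A := A) t] (Xt (S := S) (A := A) t) := by
  have h : MeasurableSpace.comap (Xt (S := S) (A := A) t) inferInstance ≤ futureSA (S := S) (A := A) t :=
    le_iSup (fun i : ℕ => MeasurableSpace.comap (Xt (S := S) (A := A) (t + i)) inferInstance) 0
  exact (comap_measurable _).mono h le_rfl

lemma alpha_bound (Pb : Measure (ℕ → S × A × ℝ)) [IsProbabilityMeasure Pb] (t m : ℕ)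
    (G H : Set (ℕ → S × A × ℝ)) (hG : MeasurableSet[pastSA (S := S) (A := A) t] G)
    (hH : MeasurableSet[futureSA (S := S) (A := A) (t + m)] H) :
    |(Pb (G ∩ H)).toReal - (Pb G).toReal * (Pb H).toReal| ≤ alphaMix (S := S) (A := A) Pb m := by
  apply le_csSup
  · refine ⟨1, ?_⟩
    rintro x ⟨t, G, H, -, -, rfl⟩
    have h1 : (Pb (G ∩ H)).toReal ≤ 1 := measureReal_le_one
    have h2 : (Pb G).toReal ≤ 1 := measureReal_le_one
    have h3 : (Pb H).toReal ≤ 1 := measureReal_le_one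
    have h4 : 0 ≤ (Pb (G ∩ H)).toReal := ENNReal.toReal_nonneg
    have h5 : 0 ≤ (Pb G).toReal := ENNReal.toReal_nonneg
    have h6 : 0 ≤ (Pb H).toReal := ENNReal.toReal_nonneg
    rw [abs_le]; constructor <;> nlinarith
  · exact ⟨t, G, H, hG, hH, rfl⟩

lemma alpha_nonneg (Pb : Measure (ℕ → S × A × ℝ)) [IsProbabilityMeasure Pb] (m : ℕ) :
    0 ≤ alphaMix (S := S) (A := A) Pb m :=
  (abs_nonneg _).trans (alpha_bound Pb 0 m ∅ ∅ (@MeasurableSet.empty _ (_)) (@MeasurableSet.empty _ (_)))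

lemma moment_int (P : Kernel (S × A) S) [IsMarkovKernel P]
    (R : Kernel (S × A) ℝ) [IsMarkovKernel R] (πb : Kernel S A) [IsMarkovKernel πb]
    (μb : Measure S) [IsProbabilityMeasure μb]
    (hstat : μb.bind (fun s => stateKernel P πb s) = μb)
    (Pb : Measure (ℕ → S × A × ℝ)) [IsProbabilityMeasure Pb]
    (hPb : ∀ n : ℕ, Pb.map (fun ω => fun i : Fin (n + 1) => ω i) = finLaw P R πb μb n)
    (n : ℕ) (B : ℝ) (g : S × A × ℝ × S → ℝ) (hg : Measurable g) (hB : ∀ x, ‖g x‖ ≤ B) :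
    ∫ ω, g (Xt n ω) ∂Pb = ∫ x, g x ∂(dataLaw P R πb μb) := by
  have hm := markov_int P R πb μb Pb hPb n
    (fun p x => g ((p (Fin.last n)).1, (p (Fin.last n)).2.1, (p (Fin.last n)).2.2, x.1))
    (by unfold Function.uncurry; fun_prop) B (fun _ _ => hB _)
  have e : ∀ y : S × A × ℝ, ∫ x, g (y.1, y.2.1, y.2.2, x.1) ∂(stepLaw P R πb y)
      = ∫ s', g (y.1, y.2.1, y.2.2, s') ∂(P (y.1, y.2.1)) := by
    intro y
    rw [step_int P R πb (fun x => g (y.1, y.2.1, y.2.2, x.1)) (by fun_prop) B (fun _ => hB _)]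
    simp
  have hV : StronglyMeasurable (fun y : S × A × ℝ => ∫ s', g (y.1, y.2.1, y.2.2, s') ∂(P (y.1, y.2.1))) := by
    exact StronglyMeasurable.integral_kernel_prod_right
      (f := fun (y : S × A × ℝ) s' => g (y.1, y.2.1, y.2.2, s'))
      (κ := P.comap (fun y : S × A × ℝ => (y.1, y.2.1)) (by fun_prop))
      (Measurable.stronglyMeasurable (by unfold Function.uncurry; fun_prop))
  calc _ = _ := hm
    _ = ∫ ω : ℕ → S × A × ℝ, ∫ s', g ((ω n).1, (ω n).2.1, (ω n).2.2, s') ∂(P ((ω n).1, (ω n).2.1)) ∂Pb := by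
        congr 1; ext ω
        exact e (ω n)
    _ = _ := stat_int P R πb μb hstat Pb hPb n B _ hV.measurable (fun y => bdd_int _ _ _ fun _ => hB _)
    _ = _ := (data_int P R πb μb g hg B hB).2.symm

lemma mart_int (P : Kernel (S × A) S) [IsMarkovKernel P]
    (R : Kernel (S × A) ℝ) [IsMarkovKernel R] (πb : Kernel S A) [IsMarkovKernel πb]
    (μb : Measure S) [IsProbabilityMeasure μb]
    (hstat : μb.bind (fun s => stateKernel P πb s) = μb)
    (Pb : Measure (ℕ → S × A × ℝ)) [IsProbabilityMeasure Pb]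
    (hPb : ∀ n : ℕ, Pb.map (fun ω => fun i : Fin (n + 1) => ω i) = finLaw P R πb μb n)
    (C : ℝ) (hC0 : 0 ≤ C) (z : S × A × ℝ × S → ℝ) (hz : Measurable z) (hC : ∀ x, |z x| ≤ C)
    (h0 : ∀ s a, ∫ r, ∫ s', z (s, a, r, s') ∂(P (s, a)) ∂(R (s, a)) = 0) (c : ℝ) (n : ℕ) :
    ∫ ω, (∏ i ∈ Finset.range n, (1 + ((c * z (Xt i ω) : ℝ) : ℂ) * Complex.I)) * (z (Xt n ω) : ℂ) ∂Pb
      = 0 := by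
  let Gp : (n : ℕ) → (Fin (n + 1) → S × A × ℝ) → ℂ := fun n p => ∏ i : Fin n,
    (1 + ((c * z ((p i.castSucc).1, (p i.castSucc).2.1, (p i.castSucc).2.2, (p i.succ).1) : ℝ) : ℂ)
      * Complex.I)
  have hGm : ∀ n, Measurable (Gp n) := by
    intro n
    simp only [Gp]
    fun_prop
  have hfac : ∀ x, ‖(1 + ((c * z x : ℝ) : ℂ) * Complex.I)‖ ≤ 1 + |c| * C := by
    intro x
    refine (norm_add_le _ _).trans ?_
    simp only [norm_one, norm_mul, Complex.norm_real, Complex.norm_I, mul_one, Real.norm_eq_abs]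
    gcongr
    exact hC x
  have hGb : ∀ n p, ‖Gp n p‖ ≤ (1 + |c| * C) ^ n := by
    intro n p
    simp only [Gp]
    rw [norm_prod]
    calc _ ≤ ∏ i : Fin n, (1 + |c| * C) :=
          Finset.prod_le_prod (fun _ _ => norm_nonneg _) fun i _ => hfac _
      _ = _ := by simp
  have hGe : ∀ n (ω : ℕ → S × A × ℝ), (∏ i ∈ Finset.range n, (1 + ((c * z (Xt i ω) : ℝ) : ℂ) * Complex.I))
      = Gp n (fun i => ω i) := by
    intro n ω
    rw [Finset.prod_range]
    rfl
  let U : S × A × ℝ → ℝ := fun y => ∫ s', z (y.1, y.2.1, y.2.2, s') ∂(P (y.1, y.2.1))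
  have hU : Measurable U := by
    refine StronglyMeasurable.measurable ?_
    exact StronglyMeasurable.integral_kernel_prod_right
      (f := fun (y : S × A × ℝ) s' => z (y.1, y.2.1, y.2.2, s'))
      (κ := P.comap (fun y : S × A × ℝ => (y.1, y.2.1)) (by fun_prop))
      (Measurable.stronglyMeasurable (by unfold Function.uncurry; fun_prop))
  have hUb : ∀ y, ‖(U y : ℂ)‖ ≤ C := fun y => by
    rw [Complex.norm_real]; exact bdd_int _ _ _ fun _ => hC _
  have hU0 : ∀ s a, ∫ r, (U (s, a, r) : ℂ) ∂(R (s, a)) = 0 := by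
    intro s a
    rw [integral_complex_ofReal, Complex.ofReal_eq_zero]
    exact h0 s a
  have hzc : ∀ y : S × A × ℝ, ∫ x, (z (y.1, y.2.1, y.2.2, x.1) : ℂ) ∂(stepLaw P R πb y) = U y := by
    intro y
    rw [step_int P R πb (fun x => (z (y.1, y.2.1, y.2.2, x.1) : ℂ)) (by fun_prop) C
      (fun _ => by rw [Complex.norm_real]; exact hC _)]
    simp only [integral_const, probReal_univ, one_smul]
    exact integral_complex_ofReal
  simp_rw [hGe]
  have h1 := markov_int P R πb μb Pb hPb n
    (fun p x => Gp n p * (z ((p (Fin.last n)).1, (p (Fin.last n)).2.1, (p (Fin.last n)).2.2, x.1) : ℂ))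
    (by unfold Function.uncurry; fun_prop) ((1 + |c| * C) ^ n * C) (fun p x => by
      rw [norm_mul]
      gcongr
      · exact hGb n p
      · rw [Complex.norm_real]; exact hC _)
  have h2 : ∫ ω : ℕ → S × A × ℝ, Gp n (fun i => ω i) * (z (Xt n ω) : ℂ) ∂Pb
      = ∫ ω : ℕ → S × A × ℝ, Gp n (fun i => ω i) * (U (ω n) : ℂ) ∂Pb := by
    refine Eq.trans h1 ?_
    congr 1; ext1 ω
    rw [integral_const_mul, ← hzc (ω n)]
    rfl
  rw [h2]
  cases n with
  | zero =>
    have : ∀ p, Gp 0 p = 1 := fun p => by simp [Gp]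
    simp_rw [this, one_mul]
    rw [stat_int P R πb μb hstat Pb hPb 0 C (fun y => (U y : ℂ)) (by fun_prop) hUb]
    simp_rw [hU0]
    simp
  | succ k =>
    have hsucc : ∀ ω : ℕ → S × A × ℝ, Gp (k+1) (fun i => ω i)
        = Gp k (fun i => ω i) * (1 + ((c * z (Xt k ω) : ℝ) : ℂ) * Complex.I) := by
      intro ω
      rw [← hGe, Finset.prod_range_succ, hGe]
    simp_rw [hsucc]
    have h3 := markov_int P R πb μb Pb hPb k
      (fun p x => Gp k p * (1 + ((c * z ((p (Fin.last k)).1, (p (Fin.last k)).2.1, (p (Fin.last k)).2.2, x.1) : ℝ) : ℂ) * Complex.I) * (U x : ℂ))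
      (by unfold Function.uncurry; fun_prop) ((1 + |c| * C) ^ k * (1 + |c| * C) * C) (fun p x => by
        rw [norm_mul, norm_mul]
        gcongr
        · exact hGb k p
        · exact hfac _
        · exact hUb _)
    refine Eq.trans h3 ?_
    have : ∀ (p : Fin (k+1) → S × A × ℝ) y, ∫ x, Gp k p * (1 + ((c * z ((p (Fin.last k)).1, (p (Fin.last k)).2.1, (p (Fin.last k)).2.2, x.1) : ℝ) : ℂ) * Complex.I) * (U x : ℂ) ∂(stepLaw P R πb y) = 0 := by
      intro p y
      rw [step_int P R πb (fun x => Gp k p * (1 + ((c * z ((p (Fin.last k)).1, (p (Fin.last k)).2.1, (p (Fin.last k)).2.2, x.1) : ℝ) : ℂ) * Complex.I) * (U x : ℂ)) (by fun_prop) ((1 + |c| * C) ^ k * (1 + |c| * C) * C) (fun x => by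
        rw [norm_mul, norm_mul]
        gcongr
        · exact hGb k p
        · exact hfac _
        · exact hUb _)]
      simp_rw [integral_const_mul, hU0]
      simp
    simp_rw [this]
    simp

set_option maxHeartbeats 2000000 in
/-- CLT for bounded `z` of the process with conditional mean zero. -/
lemma clt_bdd (P : Kernel (S × A) S) [IsMarkovKernel P]
    (R : Kernel (S × A) ℝ) [IsMarkovKernel R] (πb : Kernel S A) [IsMarkovKernel πb]
    (μb : Measure S) [IsProbabilityMeasure μb]
    (hstat : μb.bind (fun s => stateKernel P πb s) = μb)
    (Pb : Measure (ℕ → S × A × ℝ)) [IsProbabilityMeasure Pb]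
    (hPb : ∀ n : ℕ, Pb.map (fun ω => fun i : Fin (n + 1) => ω i) = finLaw P R πb μb n)
    (hmix : Summable fun m : ℕ => alphaMix (S := S) (A := A) Pb (m + 1))
    (C : ℝ) (hC0 : 0 < C) (z : S × A × ℝ × S → ℝ) (hz : Measurable z) (hC : ∀ x, |z x| ≤ C)
    (h0 : ∀ s a, ∫ r, ∫ s', z (s, a, r, s') ∂(P (s, a)) ∂(R (s, a)) = 0) (f : ℝ →ᵇ ℝ) :
    Tendsto (fun n : ℕ => ∫ ω, f ((Real.sqrt (n + 1))⁻¹ * ∑ i ∈ Finset.range (n+1), z (Xt i ω)) ∂Pb)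
      atTop (nhds (∫ x, f x ∂(gaussianReal 0
        (∫ x, z x ^ 2 ∂(dataLaw P R πb μb)).toNNReal))) := by
  have hzX : ∀ t, Measurable (fun ω : ℕ → S × A × ℝ => z (Xt t ω)) := fun t => hz.comp (meas_Xt t)
  set v := ∫ x, z x ^ 2 ∂(dataLaw P R πb μb) with hv
  have hv0 : 0 ≤ v := integral_nonneg fun _ => sq_nonneg _
  have hzz : ∀ x, z x ^ 2 ≤ C ^ 2 := fun x => by
    rw [← sq_abs]; exact pow_le_pow_left₀ (abs_nonneg _) (hC x) 2
  have hmom : ∀ t, ∫ ω, z (Xt t ω) ^ 2 ∂Pb = v := fun t =>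
    moment_int P R πb μb hstat Pb hPb t (C^2) (fun x => z x ^ 2) (by fun_prop) (fun x => by
      rw [Real.norm_of_nonneg (sq_nonneg _)]; exact hzz x)
  have hi : ∀ t, Integrable (fun ω => z (Xt t ω) ^ 2) Pb := fun t =>
    Integrable.of_bound ((hzX t).pow_const 2).aestronglyMeasurable (C^2) (ae_of_all _ fun ω => by
      rw [Real.norm_of_nonneg (sq_nonneg _)]; exact hzz _)
  have hii : ∀ t u, Integrable (fun ω => z (Xt t ω) ^ 2 * z (Xt u ω) ^ 2) Pb := fun t u =>
    (hi t).mul_bdd (c := C^2) ((hzX u).pow_const 2).aestronglyMeasurable (ae_of_all _ fun ω => by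
      rw [Real.norm_of_nonneg (sq_nonneg _)]; exact hzz _)
  have hvC : v ≤ C ^ 2 := by
    rw [← hmom 0]
    have := integral_mono (hi 0) (integrable_const (C^2)) fun ω => hzz (Xt 0 ω)
    simpa using this
  refine aux_clt Pb (fun t ω => z (Xt t ω)) hzX C (fun t ω => hC _)
    (mart_int P R πb μb hstat Pb hPb C hC0.le z hz hC h0) v hv0 ?_ f
  have hcov : ∀ t m, |∫ ω, (z (Xt t ω) ^ 2 - v) * (z (Xt (t + (m + 1)) ω) ^ 2 - v) ∂Pb|
      ≤ C ^ 4 * alphaMix (S := S) (A := A) Pb (m + 1) := by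
    intro t m
    have h := aux_cov (past_le t) (future_le (t + (m + 1))) Pb
      (fun ω => z (Xt t ω) ^ 2 / C ^ 2) (fun ω => z (Xt (t + (m + 1)) ω) ^ 2 / C ^ 2)
      (((hz.comp (meas_past t)).pow_const 2).div_const _)
      (((hz.comp (meas_future (t + (m + 1)))).pow_const 2).div_const _)
      (fun ω => by positivity) (fun ω => (div_le_one (by positivity)).2 (hzz _))
      (fun ω => by positivity) (fun ω => (div_le_one (by positivity)).2 (hzz _))
      (alphaMix (S := S) (A := A) Pb (m + 1))
      (fun G H hG hH => alpha_bound Pb t (m + 1) G H hG hH)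
    have e1 : ∀ ω : ℕ → S × A × ℝ, z (Xt t ω) ^ 2 / C ^ 2 * (z (Xt (t + (m + 1)) ω) ^ 2 / C ^ 2)
        = (z (Xt t ω) ^ 2 * z (Xt (t + (m + 1)) ω) ^ 2) / C ^ 4 := fun ω => by
      field_simp
    simp_rw [e1] at h
    rw [integral_div, integral_div, integral_div, hmom, hmom] at h
    have e2 : ∫ ω, (z (Xt t ω) ^ 2 - v) * (z (Xt (t + (m + 1)) ω) ^ 2 - v) ∂Pb
       = ∫ ω, z (Xt t ω) ^ 2 * z (Xt (t + (m + 1)) ω) ^ 2 ∂Pb - v * v := by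
      have : ∀ ω : ℕ → S × A × ℝ, (z (Xt t ω) ^ 2 - v) * (z (Xt (t + (m + 1)) ω) ^ 2 - v)
        = (z (Xt t ω) ^ 2 * z (Xt (t + (m + 1)) ω) ^ 2 - v * z (Xt t ω) ^ 2) - (v * z (Xt (t + (m + 1)) ω) ^ 2 - v * v) := fun ω => by ring
      simp_rw [this]
      rw [integral_sub, integral_sub (hii _ _) ((hi _).const_mul _), integral_sub ((hi _).const_mul _) (integrable_const _),
        integral_const_mul, integral_const_mul, hmom, hmom]
      · simp
      · exact (hii _ _).sub ((hi _).const_mul _)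
      · exact ((hi _).const_mul _).sub (integrable_const _)
    rw [e2]
    have e3 : ∀ I : ℝ, I - v * v = C ^ 4 * (I / C ^ 4 - v / C ^ 2 * (v / C ^ 2)) := fun I => by
      field_simp
    rw [e3, abs_mul, abs_of_nonneg (by positivity : 0 ≤ C ^ 4)]
    gcongr
  have hYb : ∀ t (ω : ℕ → S × A × ℝ), |z (Xt t ω) ^ 2 - v| ≤ C ^ 2 := fun t ω => by
    have := hzz (Xt t ω)
    have := sq_nonneg (z (Xt t ω))
    rw [abs_le]; constructor <;> linarith
  have hY : ∀ t, Measurable (fun ω : ℕ → S × A × ℝ => z (Xt t ω) ^ 2 - v) := fun t =>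
    ((hzX t).pow_const 2).sub_const _
  have hvar := aux_var Pb (fun t ω => z (Xt t ω) ^ 2 - v) hY (C ^ 2) hYb
    (fun m => C ^ 4 * alphaMix (S := S) (A := A) Pb (m + 1))
    (fun m => mul_nonneg (by positivity) (alpha_nonneg _ _)) (hmix.mul_left _) hcov
  have hL := aux_L1 Pb (fun t ω => z (Xt t ω) ^ 2 - v) hY (C ^ 2) hYb _ hvar
  refine hL.congr fun n => ?_
  congr 1; ext ω
  congr 1
  rw [Finset.sum_sub_distrib, mul_sub]
  congr 1
  simp
  field_simp

end process

lemma rew_ae (P : Kernel (S × A) S) [IsMarkovKernel P]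
    (Rmax : ℝ) (R : Kernel (S × A) ℝ) [IsMarkovKernel R]
    (hR : ∀ p : S × A, R p (Set.Icc (0 : ℝ) Rmax)ᶜ = 0)
    (πb : Kernel S A) [IsMarkovKernel πb]
    (μb : Measure S) [IsProbabilityMeasure μb]
    (hstat : μb.bind (fun s => stateKernel P πb s) = μb)
    (Pb : Measure (ℕ → S × A × ℝ)) [IsProbabilityMeasure Pb]
    (hPb : ∀ n : ℕ, Pb.map (fun ω => fun i : Fin (n + 1) => ω i) = finLaw P R πb μb n) :
    (∀ t, ∀ᵐ ω ∂Pb, (ω t).2.2 ∈ Set.Icc (0 : ℝ) Rmax) ∧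
      ∀ᵐ x ∂(dataLaw P R πb μb), x.2.2.1 ∈ Set.Icc (0 : ℝ) Rmax := by
  let b : ℝ → ℝ := (Set.Icc (0 : ℝ) Rmax)ᶜ.indicator 1
  have hbm : Measurable b := measurable_one.indicator measurableSet_Icc.compl
  have hb0 : ∀ r, 0 ≤ b r := fun r => Set.indicator_nonneg (fun _ _ => zero_le_one) r
  have hb1 : ∀ r, ‖b r‖ ≤ 1 := fun r => by
    rw [Real.norm_of_nonneg (hb0 r)]
    exact Set.indicator_le_self' (fun _ _ => zero_le_one) r
  have hbz : ∀ r, b r = 0 → r ∈ Set.Icc (0 : ℝ) Rmax := fun r h => by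
    by_contra hr
    have : b r = 1 := Set.indicator_of_mem hr _
    linarith
  have hbR : ∀ p, ∫ r, b r ∂(R p) = 0 := fun p => by
    have : ∫ r, b r ∂(R p) = (R p).real (Set.Icc (0 : ℝ) Rmax)ᶜ :=
      integral_indicator_one measurableSet_Icc.compl
    rw [this, Measure.real, hR]; rfl
  constructor
  · intro t
    have h := stat_int P R πb μb hstat Pb hPb t 1 (fun y => b y.2.2) (by fun_prop) (fun _ => hb1 _)
    simp only [hbR, integral_zero] at h
    rw [integral_eq_zero_iff_of_nonneg (fun _ => hb0 _)] at h
    · filter_upwards [h] with ω hω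
      exact hbz _ hω
    · exact Integrable.of_bound (Measurable.aestronglyMeasurable (by fun_prop)) 1 (ae_of_all _ fun _ => hb1 _)
  · obtain ⟨hp, h⟩ := data_int P R πb μb (fun y => b y.2.2.1) (by fun_prop) 1 (fun _ => hb1 _)
    simp only [integral_const, probReal_univ, one_smul, hbR] at h
    rw [integral_eq_zero_iff_of_nonneg (fun _ => hb0 _)] at h
    · filter_upwards [h] with ω hω
      exact hbz _ hω
    · exact Integrable.of_bound (Measurable.aestronglyMeasurable (by fun_prop)) 1 (ae_of_all _ fun _ => hb1 _)


/-- Theorem 9: asymptotic normality of the oracle DRL time-average under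
α-mixing: the law of `√(T+1)·((T+1)⁻¹ Σ_{t≤T} ψ(X_t; w, q) − ρ)` under `P_b` converges
weakly to `N(0, σ²)` with `σ² = E_D[w(s)²η(s,a)²(r + γ v(s') − q(s,a))²]`. -/
theorem oracle_DRL_clt_alpha_mixing
    (P : Kernel (S × A) S) [IsMarkovKernel P]
    (Rmax : ℝ) (hRmax : 0 < Rmax)
    (R : Kernel (S × A) ℝ) [IsMarkovKernel R]
    (hR : ∀ p : S × A, R p (Set.Icc (0 : ℝ) Rmax)ᶜ = 0)
    (γ : ℝ) (hγ0 : 0 < γ) (hγ1 : γ < 1)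
    (πe πb : Kernel S A) [IsMarkovKernel πe] [IsMarkovKernel πb]
    (μe μb : Measure S) [IsProbabilityMeasure μe] [IsProbabilityMeasure μb]
    -- stationarity: μ_b is invariant for the behavior state chain
    (hstat : μb.bind (fun s => stateKernel P πb s) = μb)
    -- the policy density ratio η, bounded: 0 ≤ η ≤ C_η
    (η : S → A → ℝ) (hη_meas : Measurable (Function.uncurry η))
    (Cη : ℝ) (hη_bdd : ∀ s a, 0 ≤ η s a ∧ η s a ≤ Cη)
    (hη : ∀ᵐ s ∂μb, πe s = (πb s).withDensity fun a => ENNReal.ofReal (η s a))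
    -- the stationary density ratio w: 0 ≤ w ≤ C_w, measurable density of d_γ wrt μ_b
    (w : S → ℝ) (hw_meas : Measurable w)
    (Cw : ℝ) (hw_bdd : ∀ s, 0 ≤ w s ∧ w s ≤ Cw)
    (hw : dgamma γ μe (stateKernel P πe) =
      μb.withDensity fun s => ENNReal.ofReal (w s))
    -- the q-function: bounded, measurable and satisfying the Bellman evaluation equation
    (q : S → A → ℝ) (hq_meas : Measurable (Function.uncurry q))
    (hq_bdd : ∃ C : ℝ, ∀ s a, |q s a| ≤ C)
    (hq_bellman : ∀ s a, q s a =
      (∫ r, r ∂(R (s, a))) + γ * ∫ s', (∫ a', q s' a' ∂(πe s')) ∂(P (s, a)))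
    -- the trajectory law P_b, characterized by its finite-dimensional prefixes
    (Pb : Measure (ℕ → S × A × ℝ)) [IsProbabilityMeasure Pb]
    (hPb : ∀ n : ℕ, Pb.map (fun ω => fun i : Fin (n + 1) => ω i) = finLaw P R πb μb n)
    -- summable α-mixing coefficients: Σ_{m ≥ 1} α_m < ∞
    (hmix : Summable fun m : ℕ => alphaMix (S := S) (A := A) Pb (m + 1)) :
    ∀ f : ℝ →ᵇ ℝ,
      Tendsto
        (fun T : ℕ => ∫ ω,
          f (Real.sqrt (T + 1) *
            (((T : ℝ) + 1)⁻¹ *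
                (∑ t ∈ Finset.range (T + 1), psiDRL γ μe πe η w q (Xt t ω)) -
              (1 - γ) * ∫ s, (∫ a, q s a ∂(πe s)) ∂μe)) ∂Pb)
        atTop
        (nhds (∫ x, f x
          ∂(gaussianReal 0
            (Real.toNNReal (∫ x, (w x.1 * η x.1 x.2.1 *
              (x.2.2.1 + γ * (∫ a, q x.2.2.2 a ∂(πe x.2.2.2)) - q x.1 x.2.1)) ^ 2
              ∂(dataLaw P R πb μb)))))) := by
  intro f
  obtain ⟨Cq, hCq⟩ := hq_bdd
  obtain ⟨hae1, hae2⟩ := rew_ae P Rmax R hR πb μb hstat Pb hPb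
  have hv : Measurable (fun s => ∫ a, q s a ∂(πe s)) :=
    (StronglyMeasurable.integral_kernel_prod_right (f := q) (κ := πe)
      hq_meas.stronglyMeasurable).measurable
  have hvb : ∀ s, |∫ a, q s a ∂(πe s)| ≤ Cq := fun s => by
    rw [← Real.norm_eq_abs]; exact bdd_int _ _ _ fun a => hCq s a
  set v : S → ℝ := fun s => ∫ a, q s a ∂(πe s) with hvdef
  let cl : ℝ → ℝ := fun r => max 0 (min r Rmax)
  have hclm : Measurable cl := by simp only [cl]; fun_prop
  have hcl0 : ∀ r, 0 ≤ cl r := fun r => le_max_left _ _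
  have hcl1 : ∀ r, cl r ≤ Rmax := fun r => max_le hRmax.le (min_le_right _ _)
  have hcle : ∀ r ∈ Set.Icc (0 : ℝ) Rmax, cl r = r := fun r hr => by
    simp only [cl]; rw [min_eq_left hr.2, max_eq_right hr.1]
  let z : S × A × ℝ × S → ℝ := fun x => w x.1 * η x.1 x.2.1 *
    (cl x.2.2.1 + γ * v x.2.2.2 - q x.1 x.2.1)
  have hz : Measurable z := by
    have h1 : Measurable (fun x : S × A × ℝ × S => η x.1 x.2.1) :=
      hη_meas.comp (g := Function.uncurry η) (f := fun x : S × A × ℝ × S => (x.1, x.2.1)) (by fun_prop)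
    have h2 : Measurable (fun x : S × A × ℝ × S => q x.1 x.2.1) :=
      hq_meas.comp (g := Function.uncurry q) (f := fun x : S × A × ℝ × S => (x.1, x.2.1)) (by fun_prop)
    simp only [z]
    fun_prop
  have hzb : ∀ x, |z x| ≤ |Cw| * |Cη| * (Rmax + γ * |Cq| + |Cq|) + 1 := by
    intro x
    have h1 : |w x.1| ≤ |Cw| := abs_le_abs_of_nonneg (hw_bdd _).1 (hw_bdd _).2
    have h2 : |η x.1 x.2.1| ≤ |Cη| := abs_le_abs_of_nonneg (hη_bdd _ _).1 (hη_bdd _ _).2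
    have h3 : |cl x.2.2.1 + γ * v x.2.2.2 - q x.1 x.2.1| ≤ Rmax + γ * |Cq| + |Cq| := by
      refine (abs_sub _ _).trans (add_le_add ((abs_add_le _ _).trans (add_le_add ?_ ?_)) ?_)
      · rw [abs_of_nonneg (hcl0 _)]; exact hcl1 _
      · rw [abs_mul, abs_of_pos hγ0]
        exact mul_le_mul_of_nonneg_left ((hvb _).trans (le_abs_self _)) hγ0.le
      · exact (hCq _ _).trans (le_abs_self _)
    have : |z x| ≤ |Cw| * |Cη| * (Rmax + γ * |Cq| + |Cq|) := by
      simp only [z]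
      rw [abs_mul, abs_mul]
      gcongr
    linarith
  have h0 : ∀ s a, ∫ r, ∫ s', z (s, a, r, s') ∂(P (s, a)) ∂(R (s, a)) = 0 := by
    intro s a
    have hvi : Integrable (fun s' => v s') (P (s, a)) :=
      Integrable.of_bound hv.aestronglyMeasurable Cq (ae_of_all _ hvb)
    have hi : ∀ r, ∫ s', z (s, a, r, s') ∂(P (s, a))
        = w s * η s a * (cl r + (γ * ∫ s', v s' ∂(P (s, a)) - q s a)) := by
      intro r
      simp only [z]
      rw [integral_const_mul]
      have e : ∀ s', cl r + γ * v s' - q s a = γ * v s' + (cl r - q s a) := fun s' => by ring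
      simp_rw [e]
      rw [integral_add (hvi.const_mul _) (integrable_const _), integral_const_mul]
      simp only [integral_const, probReal_univ, one_smul]
      ring
    simp_rw [hi]
    have hci : Integrable cl (R (s, a)) :=
      Integrable.of_bound hclm.aestronglyMeasurable Rmax (ae_of_all _ fun r => by
        rw [Real.norm_of_nonneg (hcl0 r)]; exact hcl1 r)
    rw [integral_const_mul, integral_add hci (integrable_const _)]
    have hrr : ∫ r, cl r ∂(R (s, a)) = ∫ r, r ∂(R (s, a)) := by
      refine integral_congr_ae ?_
      have : ∀ᵐ r ∂(R (s, a)), r ∈ Set.Icc (0 : ℝ) Rmax := hR (s, a)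
      filter_upwards [this] with r hr using hcle r hr
    have hb := hq_bellman s a
    rw [hrr]
    simp only [integral_const, probReal_univ, one_smul]
    have : (∫ r, r ∂(R (s, a))) + (γ * ∫ s', v s' ∂(P (s, a)) - q s a) = 0 := by
      simp only [hvdef]; linarith
    rw [this, mul_zero]
  have main := clt_bdd P R πb μb hstat Pb hPb hmix _ (by positivity) z hz hzb h0 f
  have hvar : ∫ x, (w x.1 * η x.1 x.2.1 *
              (x.2.2.1 + γ * v x.2.2.2 - q x.1 x.2.1)) ^ 2
              ∂(dataLaw P R πb μb) = ∫ x, z x ^ 2 ∂(dataLaw P R πb μb) := by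
    refine integral_congr_ae ?_
    filter_upwards [hae2] with x hx
    simp only [z]
    rw [hcle _ hx]
  rw [hvar]
  refine main.congr fun n => ?_
  refine integral_congr_ae ?_
  filter_upwards [ae_all_iff.2 hae1] with ω hω
  congr 1
  have hpsi : ∀ t, psiDRL γ μe πe η w q (Xt t ω) = (1 - γ) * (∫ s, v s ∂μe) + z (Xt t ω) := by
    intro t
    simp only [z, psiDRL, Xt]
    rw [hcle _ (hω t)]
  simp_rw [hpsi]
  rw [Finset.sum_add_distrib]
  simp only [Finset.sum_const, Finset.card_range, nsmul_eq_mul]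
  have hn : (0 : ℝ) < n + 1 := by positivity
  have hs : Real.sqrt (n + 1) ≠ 0 := (Real.sqrt_pos.2 hn).ne'
  have hss : Real.sqrt (n + 1) * Real.sqrt (n + 1) = n + 1 := Real.mul_self_sqrt hn.le
  generalize ∑ i ∈ Finset.range (n + 1), z (Xt i ω) = Sg
  generalize (1 - γ) * ∫ s, v s ∂μe = ρ
  push_cast
  rw [mul_add, inv_mul_cancel_left₀ hn.ne', add_sub_cancel_left]
  have : ((n : ℝ) + 1)⁻¹ = (Real.sqrt (n + 1))⁻¹ * (Real.sqrt (n + 1))⁻¹ := by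
    rw [← mul_inv, hss]
  rw [this, mul_assoc, mul_inv_cancel_left₀ hs]

end
end
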